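/- arXiv:1212.0115 — 4 statements merged into one kernel-verified Lean document; each statement's English description precedes it below -/
import Mathlib

section
/- Let Bⁿ be the open unit ball in ℝⁿ (n ≥ 1) and let 0 < s < 1. Then for all x, y in the ball Bⁿ(s) = {w ∈ ℝⁿ : |w| < s} one has j_{Bⁿ}(x,y) ≤ k_{Bⁿ}(x,y) ≤ (1+s)·j_{Bⁿ}(x,y), where j and k are taken with respect to the unit ball Bⁿ. -/
open Set Metric

/-- The Euclidean distance from a point to the boundary of `G`. -/
noncomputable def bdist {n : ℕ} (G : Set (EuclideanSpace ℝ (Fin n)))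
    (x : EuclideanSpace ℝ (Fin n)) : ℝ :=
  Metric.infDist x (frontier G)

/-- The quasihyperbolic length of a path `γ` (parametrized on `[0,1]`) in `G`. -/
noncomputable def qhLength {n : ℕ} (G : Set (EuclideanSpace ℝ (Fin n)))
    (γ : ℝ → EuclideanSpace ℝ (Fin n)) : ℝ :=
  ∫ t in (0:ℝ)..1, ‖deriv γ t‖ / bdist G (γ t)

/-- The quasihyperbolic metric of `G`: the infimum of quasihyperbolic lengths of
paths joining `x` and `y` inside `G`. -/
noncomputable def qhDist {n : ℕ} (G : Set (EuclideanSpace ℝ (Fin n)))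
    (x y : EuclideanSpace ℝ (Fin n)) : ℝ :=
  ⨅ γ : {γ : ℝ → EuclideanSpace ℝ (Fin n) // γ 0 = x ∧ γ 1 = y ∧
      (∀ t ∈ Set.Icc (0:ℝ) 1, γ t ∈ G) ∧ ContDiffOn ℝ 1 γ (Set.Icc 0 1)},
    qhLength G γ.1

/-- The distance ratio metric of `G`. -/
noncomputable def jDist {n : ℕ} (G : Set (EuclideanSpace ℝ (Fin n)))
    (x y : EuclideanSpace ℝ (Fin n)) : ℝ :=
  Real.log (1 + dist x y / min (bdist G x) (bdist G y))

lemma bdist_ball {n : ℕ} (hn : 1 ≤ n) (z : EuclideanSpace ℝ (Fin n)) (hz : ‖z‖ < 1) :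
    bdist (Metric.ball (0 : EuclideanSpace ℝ (Fin n)) 1) z = 1 - ‖z‖ := by
  have : Nonempty (Fin n) := ⟨⟨0, hn⟩⟩
  unfold bdist
  rw [frontier_ball _ one_ne_zero]
  have key : ∃ u : EuclideanSpace ℝ (Fin n), ‖u‖ = 1 ∧ z = ‖z‖ • u := by
    by_cases h : z = 0
    · obtain ⟨u, hu⟩ := exists_norm_eq (EuclideanSpace ℝ (Fin n)) (zero_le_one (α := ℝ))
      exact ⟨u, hu, by simp [h]⟩
    · have h' : ‖z‖ ≠ 0 := by simpa using h
      refine ⟨‖z‖⁻¹ • z, ?_, ?_⟩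
      · rw [norm_smul, norm_inv, norm_norm, inv_mul_cancel₀ h']
      · rw [smul_smul, mul_inv_cancel₀ h', one_smul]
  obtain ⟨u, hu, hzu⟩ := key
  have hus : u ∈ Metric.sphere (0 : EuclideanSpace ℝ (Fin n)) 1 := by simpa using hu
  apply le_antisymm
  · refine (Metric.infDist_le_dist_of_mem hus).trans ?_
    have : z - u = (‖z‖ - 1) • u := by
      rw [sub_smul, one_smul, ← hzu]
    rw [dist_eq_norm, this, norm_smul, hu, mul_one, Real.norm_eq_abs, abs_sub_comm,
      abs_of_pos (by linarith)]
  · rw [Metric.le_infDist ⟨u, hus⟩]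
    intro w hw
    have hw' : ‖w‖ = 1 := by simpa using hw
    rw [dist_eq_norm, ← hw', norm_sub_rev]
    exact norm_sub_norm_le w z

lemma qh_lower {n : ℕ} (hn : 1 ≤ n) (x y : EuclideanSpace ℝ (Fin n))
    (γ : ℝ → EuclideanSpace ℝ (Fin n)) (h0 : γ 0 = x) (h1 : γ 1 = y)
    (hG : ∀ t ∈ Set.Icc (0:ℝ) 1, γ t ∈ Metric.ball (0 : EuclideanSpace ℝ (Fin n)) 1)
    (hC : ContDiffOn ℝ 1 γ (Set.Icc 0 1)) :
    Real.log (1 + dist x y / (1 - ‖x‖)) ≤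
      qhLength (Metric.ball (0 : EuclideanSpace ℝ (Fin n)) 1) γ := by
  have hn1 : ∀ t ∈ Set.Icc (0:ℝ) 1, ‖γ t‖ < 1 := fun t ht => by simpa using hG t ht
  have hδ : 0 < 1 - ‖x‖ := by
    have := hn1 0 (by simp); rw [h0] at this; linarith
  have hd : ContinuousOn (derivWithin γ (Icc 0 1)) (Icc 0 1) :=
    hC.continuousOn_derivWithin (uniqueDiffOn_Icc zero_lt_one) le_rfl
  set D : ℝ → EuclideanSpace ℝ (Fin n) :=
    IccExtend (zero_le_one (α := ℝ)) (domRestrict (Icc 0 1) (derivWithin γ (Icc 0 1))) with hD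
  have hDc : Continuous D := (continuousOn_iff_continuous_domRestrict.1 hd).Icc_extend'
  have hDeq : ∀ t ∈ Icc (0:ℝ) 1, D t = derivWithin γ (Icc 0 1) t := fun t ht => by
    rw [hD, IccExtend_of_mem _ _ ht]; rfl
  have hDer : ∀ t ∈ Ioo (0:ℝ) 1, HasDerivAt γ (D t) t := fun t ht => by
    rw [hDeq t (Ioo_subset_Icc_self ht)]
    exact ((hC.differentiableOn one_ne_zero t (Ioo_subset_Icc_self ht)).hasDerivWithinAt).hasDerivAt
      (Icc_mem_nhds ht.1 ht.2)
  set l : ℝ → ℝ := fun t => ∫ u in (0:ℝ)..t, ‖D u‖ with hl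
  have hlder : ∀ t, HasDerivAt l ‖D t‖ t := fun t =>
    hDc.norm.integral_hasStrictDerivAt 0 t |>.hasDerivAt
  have hl0 : ∀ t, 0 ≤ t → 0 ≤ l t := fun t ht =>
    intervalIntegral.integral_nonneg ht (fun u _ => norm_nonneg _)
  have hxl : ∀ t ∈ Icc (0:ℝ) 1, ‖γ t - x‖ ≤ l t := by
    intro t ht
    have : ∫ u in (0:ℝ)..t, D u = γ t - γ 0 :=
      intervalIntegral.integral_eq_sub_of_hasDerivAt_of_le ht.1
        (hC.continuousOn.mono (Icc_subset_Icc_right ht.2))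
        (fun u hu => hDer u ⟨hu.1, hu.2.trans_le ht.2⟩) (hDc.intervalIntegrable _ _)
    rw [← h0, ← this]
    exact intervalIntegral.norm_integral_le_integral_norm ht.1
  have hφc : ContinuousOn (fun t => ‖D t‖ / (1 - ‖γ t‖)) (Icc 0 1) := by
    apply hDc.norm.continuousOn.div (continuousOn_const.sub hC.continuousOn.norm)
    intro t ht
    exact sub_ne_zero.2 (hn1 t ht).ne'
  have hq : qhLength (Metric.ball (0 : EuclideanSpace ℝ (Fin n)) 1) γ
      = ∫ t in (0:ℝ)..1, ‖D t‖ / (1 - ‖γ t‖) := by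
    unfold qhLength
    rw [intervalIntegral.integral_of_le zero_le_one, intervalIntegral.integral_of_le zero_le_one,
      MeasureTheory.integral_Ioc_eq_integral_Ioo, MeasureTheory.integral_Ioc_eq_integral_Ioo]
    apply MeasureTheory.setIntegral_congr_fun measurableSet_Ioo
    intro t ht
    simp only
    rw [(hDer t ht).deriv, bdist_ball hn _ (hn1 t (Ioo_subset_Icc_self ht))]
  have hder : ∀ t, 0 ≤ t → HasDerivAt (fun t => Real.log ((1 - ‖x‖) + l t))
      (‖D t‖ / ((1 - ‖x‖) + l t)) t := by
    intro t ht
    exact ((hlder t).const_add _).log (by have := hl0 t ht; linarith)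
  have hmain := intervalIntegral.sub_le_integral_of_hasDeriv_right_of_le
    (g := fun t => Real.log ((1 - ‖x‖) + l t)) (g' := fun t => ‖D t‖ / ((1 - ‖x‖) + l t))
    (φ := fun t => ‖D t‖ / (1 - ‖γ t‖)) (zero_le_one (α := ℝ))
    (fun t ht => (hder t ht.1).continuousAt.continuousWithinAt)
    (fun t ht => (hder t ht.1.le).hasDerivWithinAt)
    hφc.integrableOn_Icc
    (fun t ht => by
      have h1 := hn1 t (Ioo_subset_Icc_self ht)
      have h2 := hxl t (Ioo_subset_Icc_self ht)
      have h3 := norm_sub_norm_le x (γ t)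
      rw [norm_sub_rev] at h3
      have : 0 < 1 - ‖γ t‖ := by linarith
      exact div_le_div_of_nonneg_left (norm_nonneg _) this (by linarith))
  rw [hq]
  refine le_trans ?_ hmain
  have hl00 : l 0 = 0 := by simp [hl]
  have hl1 := hxl 1 (by simp)
  simp only [hl00, add_zero]
  have h01 := hl0 1 zero_le_one
  rw [← Real.log_div (by linarith) hδ.ne']
  apply Real.log_le_log
  · positivity
  · rw [h1, ← dist_eq_norm, dist_comm] at hl1
    rw [add_div, div_self hδ.ne']
    gcongr

lemma j_le_qhLength {n : ℕ} (hn : 1 ≤ n) (x y : EuclideanSpace ℝ (Fin n))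
    (γ : ℝ → EuclideanSpace ℝ (Fin n)) (h0 : γ 0 = x) (h1 : γ 1 = y)
    (hG : ∀ t ∈ Set.Icc (0:ℝ) 1, γ t ∈ Metric.ball (0 : EuclideanSpace ℝ (Fin n)) 1)
    (hC : ContDiffOn ℝ 1 γ (Set.Icc 0 1)) :
    jDist (Metric.ball (0 : EuclideanSpace ℝ (Fin n)) 1) x y ≤
      qhLength (Metric.ball (0 : EuclideanSpace ℝ (Fin n)) 1) γ := by
  have hx : ‖x‖ < 1 := by simpa [h0] using hG 0 (by simp)
  have hy : ‖y‖ < 1 := by simpa [h1] using hG 1 (by simp)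
  unfold jDist
  rw [bdist_ball hn x hx, bdist_ball hn y hy]
  rcases min_choice (1 - ‖x‖) (1 - ‖y‖) with h | h <;> rw [h]
  · exact qh_lower hn x y γ h0 h1 hG hC
  · have hm : MapsTo (fun t : ℝ => 1 - t) (Icc 0 1) (Icc 0 1) := fun t ht =>
      ⟨by linarith [ht.2], by linarith [ht.1]⟩
    have := qh_lower hn y x (fun t => γ (1 - t)) (by simpa) (by simpa)
      (fun t ht => hG _ (hm ht)) (hC.comp (by fun_prop) hm)
    rw [dist_comm]
    refine this.trans (le_of_eq ?_)
    unfold qhLength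
    have e := intervalIntegral.integral_comp_sub_left (a := 0) (b := 1)
      (fun t => ‖deriv γ t‖ / bdist (Metric.ball (0 : EuclideanSpace ℝ (Fin n)) 1) (γ t)) 1
    simp only [sub_self, sub_zero] at e
    rw [← e]
    simp only [deriv_comp_const_sub, norm_neg]

lemma scalar_bound {a b d : ℝ} (hb : 0 ≤ b) (hba : b ≤ a) (ha : a < 1) (hd : 0 ≤ d)
    (hdab : d ≤ a + b) :
    d / √((1 - a ^ 2) * (1 - b ^ 2)) ≤ Real.sinh (Real.log (1 + d / (1 - a))) := by
  have h1a : 0 < 1 - a := by linarith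
  have hA : 0 < 1 - a ^ 2 := by nlinarith
  have hB : 0 < 1 - b ^ 2 := by nlinarith
  have ht : 0 < 1 + d / (1 - a) := by positivity
  rw [Real.sinh_log ht]
  have e : (1 + d / (1 - a) - (1 + d / (1 - a))⁻¹) / 2
      = d * ((2 * (1 - a) + d) / (2 * (1 - a) * (1 - a + d))) := by
    have : 1 - a + d ≠ 0 := by positivity
    field_simp
    ring
  rw [e, div_eq_mul_inv]
  apply mul_le_mul_of_nonneg_left _ hd
  have h2 : (2 - a + b) / (2 * (1 - a) * (1 + b)) ≤
      (2 * (1 - a) + d) / (2 * (1 - a) * (1 - a + d)) := by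
    rw [div_le_div_iff₀ (by positivity) (by positivity)]
    have : 0 ≤ 2 * (1 - a) * ((1 - a) * (a + b - d)) := by
      have : 0 ≤ a + b - d := by linarith
      positivity
    nlinarith
  refine le_trans ?_ h2
  rw [inv_le_comm₀ (by positivity) (by apply div_pos <;> [linarith; positivity])]
  apply Real.le_sqrt_of_sq_le
  rw [inv_div, div_pow, div_le_iff₀ (by apply pow_pos; linarith)]
  have key : 4 * ((1 - a) * (1 + b)) ≤ (2 - a + b) ^ 2 * ((1 + a) * (1 - b)) := by
    obtain ⟨u, rfl⟩ : ∃ u, a = b + u := ⟨a - b, by ring⟩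
    have hu : 0 ≤ u := by linarith
    have hu1 : 0 ≤ 1 - u := by linarith
    have hp : 0 ≤ (b + u) * b := by positivity
    have hp1 : 0 ≤ 1 - (b + u) * b := by nlinarith
    have : 0 ≤ 4 * u * (1 - u) + 4 * u * ((b + u) * b) + u ^ 2 * (1 - (b + u) * b) + u ^ 3 := by
      positivity
    nlinarith
  have : 0 ≤ (1 - a) * (1 + b) := by positivity
  nlinarith [mul_le_mul_of_nonneg_left key this]

lemma speed {n : ℕ} {V : ℝ → EuclideanSpace ℝ (Fin n)} {c : ℝ → ℝ}
    {V' : EuclideanSpace ℝ (Fin n)} {c' ρ t : ℝ} (hρ : 0 ≤ ρ)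
    (hV : HasDerivAt V V' t) (hc : HasDerivAt c c' t) (hc0 : 0 < 1 + c t)
    (h1 : ‖V t‖ ^ 2 = c t ^ 2 - 1) (h2 : inner ℝ (V t) V' = c t * c')
    (h3 : ‖V'‖ ^ 2 = c' ^ 2 + ρ ^ 2) :
    ‖(1 + c t)⁻¹ • V t‖ ^ 2 = 1 - 2 / (1 + c t) ∧
    ‖deriv (fun t => (1 + c t)⁻¹ • V t) t‖ = ρ / (1 + c t) := by
  constructor
  · rw [norm_smul, mul_pow, h1, norm_inv, Real.norm_eq_abs, inv_pow, sq_abs]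
    field_simp
    ring
  · have hd := ((hc.const_add 1).inv hc0.ne').smul hV
    have hd' : HasDerivAt (fun t => (1 + c t)⁻¹ • V t) _ t := hd
    rw [hd'.deriv]
    have : 0 ≤ ρ / (1 + c t) := by positivity
    rw [← sq_eq_sq₀ (norm_nonneg _) this, norm_add_sq_real, norm_smul, norm_smul, mul_pow, mul_pow,
      h1, h3, inner_smul_left, inner_smul_right, real_inner_comm, h2]
    simp only [Real.norm_eq_abs, sq_abs, Pi.inv_apply]
    simp
    field_simp
    ring

set_option maxHeartbeats 1600000 in
lemma exists_path {n : ℕ} (hn : 1 ≤ n) (s : ℝ) (hs0 : 0 < s) (hs1 : s < 1)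
    (x y : EuclideanSpace ℝ (Fin n)) (hx : ‖x‖ < s) (hy : ‖y‖ < s) (hxy : x ≠ y) :
    ∃ γ : ℝ → EuclideanSpace ℝ (Fin n), (γ 0 = x ∧ γ 1 = y ∧
      (∀ t ∈ Set.Icc (0:ℝ) 1, γ t ∈ Metric.ball (0 : EuclideanSpace ℝ (Fin n)) 1) ∧
      ContDiffOn ℝ 1 γ (Set.Icc 0 1)) ∧
      qhLength (Metric.ball (0 : EuclideanSpace ℝ (Fin n)) 1) γ ≤
        (1 + s) * Real.arsinh (dist x y / √((1 - ‖x‖ ^ 2) * (1 - ‖y‖ ^ 2))) := by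
  have hA : 0 < 1 - ‖x‖ ^ 2 := by nlinarith [norm_nonneg x]
  have hB : 0 < 1 - ‖y‖ ^ 2 := by nlinarith [norm_nonneg y]
  have hSs : 0 < 1 - s ^ 2 := by nlinarith
  have hAs : ‖x‖ ^ 2 ≤ s ^ 2 := by gcongr
  have hBs : ‖y‖ ^ 2 ≤ s ^ 2 := by gcongr
  set A := 1 - ‖x‖ ^ 2 with hAdef
  set B := 1 - ‖y‖ ^ 2 with hBdef
  set D := dist x y / √(A * B) with hD
  have hdist : 0 < dist x y := dist_pos.2 hxy
  have hD0 : 0 < D := by positivity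
  set ρ := 2 * Real.arsinh D with hρdef
  have hρ : 0 < ρ := by have := Real.arsinh_pos_iff.2 hD0; positivity
  set S := Real.sinh ρ with hS
  have hS0 : 0 < S := Real.sinh_pos_iff.2 hρ
  set C := Real.cosh ρ with hC
  have hCD : C = 1 + 2 * dist x y ^ 2 / (A * B) := by
    rw [hC, hρdef, Real.cosh_two_mul, Real.cosh_sq, Real.sinh_arsinh, hD, div_pow,
      Real.sq_sqrt (by positivity)]
    ring
  set cx := 2 / A - 1 with hcx
  set cy := 2 / B - 1 with hcy
  set Vx := (2 / A) • x with hVx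
  set Vy := (2 / B) • y with hVy
  have hxx : ‖Vx‖ ^ 2 = cx ^ 2 - 1 := by
    have : ‖x‖ ^ 2 = 1 - A := by rw [hAdef]; ring
    rw [hVx, norm_smul, mul_pow, this, hcx, Real.norm_eq_abs, sq_abs]
    field_simp; ring
  have hyy : ‖Vy‖ ^ 2 = cy ^ 2 - 1 := by
    have : ‖y‖ ^ 2 = 1 - B := by rw [hBdef]; ring
    rw [hVy, norm_smul, mul_pow, this, hcy, Real.norm_eq_abs, sq_abs]
    field_simp; ring
  have hVW : inner ℝ Vx Vy = cx * cy - C := by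
    have h1 : ‖x‖ ^ 2 = 1 - A := by rw [hAdef]; ring
    have h2 : ‖y‖ ^ 2 = 1 - B := by rw [hBdef]; ring
    rw [hVx, hVy, inner_smul_left, inner_smul_right, hCD, dist_eq_norm, norm_sub_sq_real, h1, h2,
      hcx, hcy]
    simp
    field_simp; ring
  have hcx0 : 0 < cx := by
    rw [hcx, sub_pos, lt_div_iff₀ hA]; nlinarith [norm_nonneg x]
  have hcy0 : 0 < cy := by
    rw [hcy, sub_pos, lt_div_iff₀ hB]; nlinarith [norm_nonneg y]
  have hcxs : cx ≤ 2 / (1 - s ^ 2) - 1 := by rw [hcx]; gcongr; linarith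
  have hcys : cy ≤ 2 / (1 - s ^ 2) - 1 := by rw [hcy]; gcongr; linarith
  clear_value Vx Vy cx cy C S ρ D A B
  let p : ℝ → ℝ := fun t => Real.sinh ((1 - t) * ρ) / S
  let q : ℝ → ℝ := fun t => Real.sinh (t * ρ) / S
  let c : ℝ → ℝ := fun t => p t * cx + q t * cy
  let V : ℝ → EuclideanSpace ℝ (Fin n) := fun t => p t • Vx + q t • Vy
  let p' : ℝ → ℝ := fun t => -(ρ * Real.cosh ((1 - t) * ρ)) / S
  let q' : ℝ → ℝ := fun t => ρ * Real.cosh (t * ρ) / S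
  have hp' : ∀ t, HasDerivAt p (p' t) t := by
    intro t
    have h : HasDerivAt (fun t : ℝ => (1 - t) * ρ) (-1 * ρ) t :=
      ((hasDerivAt_id t).const_sub 1).mul_const ρ
    convert! (h.sinh.div_const S) using 1
    simp only [p']; ring
  have hq' : ∀ t, HasDerivAt q (q' t) t := by
    intro t
    have h : HasDerivAt (fun t : ℝ => t * ρ) (1 * ρ) t := (hasDerivAt_id t).mul_const ρ
    convert! (h.sinh.div_const S) using 1
    simp only [q']; ring
  have hSadd : ∀ t : ℝ, S = Real.sinh ((1 - t) * ρ) * Real.cosh (t * ρ)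
      + Real.cosh ((1 - t) * ρ) * Real.sinh (t * ρ) := by
    intro t; rw [← Real.sinh_add, hS]; congr 1; ring
  have hCadd : ∀ t : ℝ, C = Real.cosh ((1 - t) * ρ) * Real.cosh (t * ρ)
      + Real.sinh ((1 - t) * ρ) * Real.sinh (t * ρ) := by
    intro t; rw [← Real.cosh_add, hC]; congr 1; ring
  have i1 : ∀ t, p t ^ 2 + q t ^ 2 + 2 * p t * q t * C = 1 := by
    intro t
    have e : Real.sinh ((1 - t) * ρ) ^ 2 + Real.sinh (t * ρ) ^ 2
        + 2 * Real.sinh ((1 - t) * ρ) * Real.sinh (t * ρ) * C = S ^ 2 := by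
      rw [hSadd t, hCadd t]
      linear_combination (-Real.sinh ((1 - t) * ρ) ^ 2) * Real.cosh_sq (t * ρ)
        - Real.sinh (t * ρ) ^ 2 * Real.cosh_sq ((1 - t) * ρ)
    simp only [p, q]
    field_simp
    linear_combination e
  have i2 : ∀ t, p' t ^ 2 + q' t ^ 2 + 2 * p' t * q' t * C = -ρ ^ 2 := by
    intro t
    have e : Real.cosh ((1 - t) * ρ) ^ 2 + Real.cosh (t * ρ) ^ 2
        - 2 * Real.cosh ((1 - t) * ρ) * Real.cosh (t * ρ) * C = -S ^ 2 := by
      rw [hSadd t, hCadd t]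
      linear_combination (-Real.cosh ((1 - t) * ρ) ^ 2) * Real.cosh_sq (t * ρ)
        - Real.cosh (t * ρ) ^ 2 * Real.cosh_sq ((1 - t) * ρ)
    have e2 : p' t ^ 2 + q' t ^ 2 + 2 * p' t * q' t * C = ρ ^ 2 / S ^ 2 *
        (Real.cosh ((1 - t) * ρ) ^ 2 + Real.cosh (t * ρ) ^ 2
        - 2 * Real.cosh ((1 - t) * ρ) * Real.cosh (t * ρ) * C) := by
      simp only [p', q']
      ring
    rw [e2, e]
    field_simp
  have i3 : ∀ t, p t * p' t + q t * q' t + (p t * q' t + p' t * q t) * C = 0 := by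
    intro t
    have e : -Real.sinh ((1 - t) * ρ) * Real.cosh ((1 - t) * ρ)
        + Real.sinh (t * ρ) * Real.cosh (t * ρ)
        + (Real.sinh ((1 - t) * ρ) * Real.cosh (t * ρ)
          - Real.cosh ((1 - t) * ρ) * Real.sinh (t * ρ)) * C = 0 := by
      rw [hCadd t]
      linear_combination (Real.sinh ((1 - t) * ρ) * Real.cosh ((1 - t) * ρ))
        * Real.cosh_sq (t * ρ)
        - Real.sinh (t * ρ) * Real.cosh (t * ρ) * Real.cosh_sq ((1 - t) * ρ)
    have e2 : p t * p' t + q t * q' t + (p t * q' t + p' t * q t) * C = ρ / S ^ 2 *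
        (-Real.sinh ((1 - t) * ρ) * Real.cosh ((1 - t) * ρ)
        + Real.sinh (t * ρ) * Real.cosh (t * ρ)
        + (Real.sinh ((1 - t) * ρ) * Real.cosh (t * ρ)
          - Real.cosh ((1 - t) * ρ) * Real.sinh (t * ρ)) * C) := by
      simp only [p, q, p', q']
      ring
    rw [e2, e, mul_zero]
  have hp0 : ∀ t ∈ Icc (0:ℝ) 1, 0 ≤ p t := fun t ht => by
    apply div_nonneg _ hS0.le
    exact Real.sinh_nonneg_iff.2 (mul_nonneg (by linarith [ht.2]) hρ.le)
  have hq0 : ∀ t ∈ Icc (0:ℝ) 1, 0 ≤ q t := fun t ht => by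
    apply div_nonneg _ hS0.le
    exact Real.sinh_nonneg_iff.2 (mul_nonneg ht.1 hρ.le)
  have hpq : ∀ t ∈ Icc (0:ℝ) 1, p t + q t ≤ 1 := fun t ht => by
    simp only [p, q]
    rw [← add_div, div_le_one hS0, hSadd t]
    have h1 : 0 ≤ Real.sinh ((1 - t) * ρ) :=
      Real.sinh_nonneg_iff.2 (mul_nonneg (by linarith [ht.2]) hρ.le)
    have h2 : 0 ≤ Real.sinh (t * ρ) := Real.sinh_nonneg_iff.2 (mul_nonneg ht.1 hρ.le)
    nlinarith [Real.one_le_cosh (t * ρ), Real.one_le_cosh ((1 - t) * ρ)]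
  have hc0 : ∀ t ∈ Icc (0:ℝ) 1, 0 < 1 + c t := fun t ht => by
    have h1 := hp0 t ht
    have h2 := hq0 t ht
    simp only [c]; positivity
  have hcs : ∀ t ∈ Icc (0:ℝ) 1, 1 + c t ≤ 2 / (1 - s ^ 2) := fun t ht => by
    have h1 := hp0 t ht
    have h2 := hq0 t ht
    have h3 := hpq t ht
    simp only [c]
    have h4 := mul_le_mul_of_nonneg_left hcxs h1
    have h5 := mul_le_mul_of_nonneg_left hcys h2
    have h6 := mul_le_mul_of_nonneg_right h3 (hcx0.le.trans hcxs)
    nlinarith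
  have hcder : ∀ t, HasDerivAt c (p' t * cx + q' t * cy) t := fun t =>
    ((hp' t).mul_const cx).add ((hq' t).mul_const cy)
  have hVder : ∀ t, HasDerivAt V (p' t • Vx + q' t • Vy) t := fun t =>
    ((hp' t).smul_const Vx).add ((hq' t).smul_const Vy)
  have hsp : ∀ t ∈ Icc (0:ℝ) 1, ‖(1 + c t)⁻¹ • V t‖ ^ 2 = 1 - 2 / (1 + c t) ∧
      ‖deriv (fun t => (1 + c t)⁻¹ • V t) t‖ = ρ / (1 + c t) := by
    intro t ht
    refine speed hρ.le (hVder t) (hcder t) (hc0 t ht) ?_ ?_ ?_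
    · simp only [V, c]
      rw [norm_add_sq_real, norm_smul, norm_smul, mul_pow, mul_pow, hxx, hyy, inner_smul_left,
        inner_smul_right, hVW]
      simp only [Real.norm_eq_abs, sq_abs, conj_trivial]
      linear_combination -i1 t
    · simp only [V, c]
      simp only [inner_add_left, inner_add_right, inner_smul_left, inner_smul_right,
        real_inner_self_eq_norm_sq, real_inner_comm Vx Vy, hxx, hyy, hVW, conj_trivial]
      linear_combination -i3 t
    · rw [norm_add_sq_real, norm_smul, norm_smul, mul_pow, mul_pow, hxx, hyy, inner_smul_left,
        inner_smul_right, hVW]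
      simp only [Real.norm_eq_abs, sq_abs, conj_trivial]
      linear_combination -i2 t
  have hns : ∀ t ∈ Icc (0:ℝ) 1, ‖(1 + c t)⁻¹ • V t‖ ≤ s := by
    intro t ht
    apply (sq_le_sq₀ (norm_nonneg _) hs0.le).1
    rw [(hsp t ht).1]
    have h1 := hcs t ht
    rw [le_div_iff₀ hSs] at h1
    have : 1 - s ^ 2 ≤ 2 / (1 + c t) := by
      rw [le_div_iff₀ (hc0 t ht)]; linarith
    linarith
  refine ⟨fun t => (1 + c t)⁻¹ • V t, ⟨?_, ?_, ?_, ?_⟩, ?_⟩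
  · have hp : p 0 = 1 := by simp [p, hS0.ne', ← hS]
    have hq : q 0 = 0 := by simp [q]
    simp only [c, V, hp, hq, hcx, hVx]
    rw [one_smul, zero_smul, add_zero, smul_smul]
    have : (1 + (1 * (2 / A - 1) + 0 * cy))⁻¹ * (2 / A) = 1 := by field_simp; ring
    rw [this, one_smul]
  · have hp : p 1 = 0 := by simp [p]
    have hq : q 1 = 1 := by simp [q, hS0.ne', ← hS]
    simp only [c, V, hp, hq, hcy, hVy]
    rw [one_smul, zero_smul, zero_add, smul_smul]
    have : (1 + (0 * cx + 1 * (2 / B - 1)))⁻¹ * (2 / B) = 1 := by field_simp; ring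
    rw [this, one_smul]
  · intro t ht
    simpa using (hns t ht).trans_lt hs1
  · have hpc : ContDiff ℝ 1 p := by
      simp only [p]
      exact (Real.contDiff_sinh.comp (by fun_prop)).div_const S
    have hqc : ContDiff ℝ 1 q := by
      simp only [q]
      exact (Real.contDiff_sinh.comp (by fun_prop)).div_const S
    have hcc : ContDiff ℝ 1 c := (hpc.mul contDiff_const).add (hqc.mul contDiff_const)
    have hVc : ContDiff ℝ 1 V := (hpc.smul contDiff_const).add (hqc.smul contDiff_const)
    exact ((contDiff_const.add hcc).contDiffOn.inv (fun t ht => (hc0 t ht).ne')).smul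
      hVc.contDiffOn
  · unfold qhLength
    refine (le_abs_self _).trans ?_
    rw [← Real.norm_eq_abs]
    have hb := intervalIntegral.norm_integral_le_of_norm_le_const (a := 0) (b := 1)
      (C := (1 + s) * Real.arsinh D)
      (f := fun t => ‖deriv (fun t => (1 + c t)⁻¹ • V t) t‖ /
        bdist (Metric.ball (0 : EuclideanSpace ℝ (Fin n)) 1) ((1 + c t)⁻¹ • V t)) ?_
    · simpa using hb
    · intro t ht
      rw [uIoc_of_le zero_le_one] at ht
      have ht' := Ioc_subset_Icc_self ht
      have h1 := hns t ht'
      obtain ⟨h2, h3⟩ := hsp t ht'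
      have h4 := hc0 t ht'
      rw [bdist_ball hn _ (h1.trans_lt hs1), h3]
      set r := ‖(1 + c t)⁻¹ • V t‖ with hr
      have hr0 : 0 ≤ r := norm_nonneg _
      have hr1 : 0 < 1 - r := by linarith
      rw [Real.norm_of_nonneg (by positivity)]
      have e : ρ / (1 + c t) = Real.arsinh D * ((1 + r) * (1 - r)) := by
        have : (1 + r) * (1 - r) = 2 / (1 + c t) := by linear_combination -h2
        rw [this, hρdef]; ring
      rw [e, ← mul_assoc, mul_div_cancel_right₀ _ hr1.ne', mul_comm]
      have := (Real.arsinh_pos_iff.2 hD0).le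
      gcongr


lemma qhDist_le {n : ℕ} (hn : 1 ≤ n) (x y : EuclideanSpace ℝ (Fin n))
    (γ : ℝ → EuclideanSpace ℝ (Fin n)) (hP : γ 0 = x ∧ γ 1 = y ∧
      (∀ t ∈ Set.Icc (0:ℝ) 1, γ t ∈ Metric.ball (0 : EuclideanSpace ℝ (Fin n)) 1) ∧
      ContDiffOn ℝ 1 γ (Set.Icc 0 1)) :
    jDist (Metric.ball (0 : EuclideanSpace ℝ (Fin n)) 1) x y ≤
      qhDist (Metric.ball (0 : EuclideanSpace ℝ (Fin n)) 1) x y ∧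
    qhDist (Metric.ball (0 : EuclideanSpace ℝ (Fin n)) 1) x y ≤
      qhLength (Metric.ball (0 : EuclideanSpace ℝ (Fin n)) 1) γ := by
  let T := {γ : ℝ → EuclideanSpace ℝ (Fin n) // γ 0 = x ∧ γ 1 = y ∧
      (∀ t ∈ Set.Icc (0:ℝ) 1, γ t ∈ Metric.ball (0 : EuclideanSpace ℝ (Fin n)) 1) ∧
      ContDiffOn ℝ 1 γ (Set.Icc 0 1)}
  have : Nonempty T := ⟨⟨γ, hP⟩⟩
  have hj : ∀ g : T, jDist (Metric.ball (0 : EuclideanSpace ℝ (Fin n)) 1) x y ≤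
      qhLength (Metric.ball (0 : EuclideanSpace ℝ (Fin n)) 1) g.1 := fun g =>
    j_le_qhLength hn x y g.1 g.2.1 g.2.2.1 g.2.2.2.1 g.2.2.2.2
  constructor
  · exact le_ciInf hj
  · have hb : BddBelow (range fun g : T =>
        qhLength (Metric.ball (0 : EuclideanSpace ℝ (Fin n)) 1) g.1) :=
      ⟨jDist (Metric.ball (0 : EuclideanSpace ℝ (Fin n)) 1) x y, by
        rintro _ ⟨g, rfl⟩; exact hj g⟩
    exact ciInf_le hb (⟨γ, hP⟩ : T)

theorem stmt_3 (n : ℕ) (hn : 1 ≤ n) (s : ℝ) (hs0 : 0 < s) (hs1 : s < 1)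
    (x y : EuclideanSpace ℝ (Fin n))
    (hx : x ∈ Metric.ball (0 : EuclideanSpace ℝ (Fin n)) s)
    (hy : y ∈ Metric.ball (0 : EuclideanSpace ℝ (Fin n)) s) :
    jDist (Metric.ball (0 : EuclideanSpace ℝ (Fin n)) 1) x y ≤
      qhDist (Metric.ball (0 : EuclideanSpace ℝ (Fin n)) 1) x y ∧
    qhDist (Metric.ball (0 : EuclideanSpace ℝ (Fin n)) 1) x y ≤
      (1 + s) * jDist (Metric.ball (0 : EuclideanSpace ℝ (Fin n)) 1) x y := by
  have hx' : ‖x‖ < s := by simpa using hx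
  have hy' : ‖y‖ < s := by simpa using hy
  by_cases hxy : x = y
  · subst hxy
    have hP : (fun _ : ℝ => x) 0 = x ∧ (fun _ : ℝ => x) 1 = x ∧
      (∀ t ∈ Set.Icc (0:ℝ) 1, (fun _ : ℝ => x) t ∈
        Metric.ball (0 : EuclideanSpace ℝ (Fin n)) 1) ∧
      ContDiffOn ℝ 1 (fun _ : ℝ => x) (Set.Icc 0 1) :=
      ⟨rfl, rfl, fun t _ => by simpa using hx'.trans hs1, contDiffOn_const⟩
    obtain ⟨h1, h2⟩ := qhDist_le hn x x (fun _ => x) hP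
    refine ⟨h1, h2.trans ?_⟩
    simp [qhLength, jDist]
  obtain ⟨γ₀, hP, hle⟩ := exists_path hn s hs0 hs1 x y hx' hy' hxy
  obtain ⟨h1, h2⟩ := qhDist_le hn x y γ₀ hP
  refine ⟨h1, h2.trans (hle.trans ?_)⟩
  apply mul_le_mul_of_nonneg_left _ (by linarith)
  rw [← Real.sinh_le_sinh, Real.sinh_arsinh]
  unfold jDist
  rw [bdist_ball hn x (hx'.trans hs1), bdist_ball hn y (hy'.trans hs1)]
  have hd : dist x y ≤ ‖x‖ + ‖y‖ := by rw [dist_eq_norm]; exact norm_sub_le x y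
  rcases le_total ‖y‖ ‖x‖ with h | h
  · rw [min_eq_left (by linarith)]
    exact scalar_bound (norm_nonneg _) h (hx'.trans hs1) dist_nonneg hd
  · rw [min_eq_right (by linarith), mul_comm (1 - ‖x‖ ^ 2)]
    exact scalar_bound (norm_nonneg _) h (hy'.trans hs1) dist_nonneg (by linarith)
end

section
/- Let n ≥ 2, let G = ℝⁿ \ {0}, and let x, y, z ∈ G satisfy k_G(x,z) = k_G(y,z) and |z| ≤ |x|, |z| ≤ |y|. If the angle ∠(x, z, 0) is strictly smaller than the angle ∠(y, z, 0), then |x − z| < |y − z|. -/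
open Set Metric

open InnerProductGeometry in
lemma aux_geom {n : ℕ} (x y z : EuclideanSpace ℝ (Fin n))
    (hx : x ≠ 0) (hy : y ≠ 0) (hz : z ≠ 0)
    (hk : angle x z ^ 2 + (Real.log ‖x‖ - Real.log ‖z‖) ^ 2
      = angle y z ^ 2 + (Real.log ‖y‖ - Real.log ‖z‖) ^ 2)
    (hzx : ‖z‖ ≤ ‖x‖) (hzy : ‖z‖ ≤ ‖y‖)
    (hang : EuclideanGeometry.angle x z 0 < EuclideanGeometry.angle y z 0) :
    dist x z < dist y z := by
  have hX : 0 < ‖x‖ := norm_pos_iff.2 hx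
  have hY : 0 < ‖y‖ := norm_pos_iff.2 hy
  have hZ : 0 < ‖z‖ := norm_pos_iff.2 hz
  have hlx := Real.log_le_log hZ hzx
  have hly := Real.log_le_log hZ hzy
  have hax0 := angle_nonneg x z
  have hay0 := angle_nonneg y z
  have haxp := angle_le_pi x z
  have hayp := angle_le_pi y z
  have hdist : ∀ p : EuclideanSpace ℝ (Fin n), p ≠ 0 →
      dist p z ^ 2 = 2 * ‖p‖ * ‖z‖ * (Real.cosh (Real.log ‖p‖ - Real.log ‖z‖)
        - Real.cos (angle p z)) := by
    intro p hp
    have hP : 0 < ‖p‖ := norm_pos_iff.2 hp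
    rw [dist_eq_norm, @norm_sub_sq_real, Real.cosh_eq, neg_sub, Real.exp_sub, Real.exp_sub,
      Real.exp_log hP, Real.exp_log hZ, ← cos_angle_mul_norm_mul_norm]
    field_simp
    ring
  by_cases hXY : ‖x‖ < ‖y‖
  · -- distance
    have hlxy := Real.log_lt_log hX hXY
    have hαα : angle y z ≤ angle x z := by
      refine (sq_le_sq₀ (by assumption) (by assumption)).1 ?_
      nlinarith
    have hcosh : MonotoneOn (fun t : ℝ => Real.cosh t - t ^ 2 / 2) (Set.Ici 0) := by
      apply monotoneOn_of_deriv_nonneg (convex_Ici 0)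
      · fun_prop
      · fun_prop
      · intro t ht
        simp only [interior_Ici, mem_Ioi] at ht
        have : HasDerivAt (fun t : ℝ => Real.cosh t - t ^ 2 / 2) (Real.sinh t - t) t := by
          have := (Real.hasDerivAt_cosh t).sub ((hasDerivAt_pow 2 t).div_const 2)
          exact this.congr_deriv (by simp)
        rw [this.deriv]
        linarith [Real.self_le_sinh_iff.2 ht.le]
    have hcos : MonotoneOn (fun t : ℝ => Real.cos t + t ^ 2 / 2) (Set.Ici 0) := by
      apply monotoneOn_of_deriv_nonneg (convex_Ici 0)
      · fun_prop
      · fun_prop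
      · intro t ht
        simp only [interior_Ici, mem_Ioi] at ht
        have : HasDerivAt (fun t : ℝ => Real.cos t + t ^ 2 / 2) (-Real.sin t + t) t := by
          have := (Real.hasDerivAt_cos t).add ((hasDerivAt_pow 2 t).div_const 2)
          exact this.congr_deriv (by simp)
        rw [this.deriv]
        linarith [Real.sin_le ht.le]
    have h1 := hcosh (a := Real.log ‖x‖ - Real.log ‖z‖) (b := Real.log ‖y‖ - Real.log ‖z‖)
      (by simp; linarith) (by simp; linarith) (by linarith)
    have h2 := hcos (a := angle y z) (b := angle x z) hay0 hax0 hαα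
    simp only at h1 h2
    have h3 : Real.cos (angle y z) < Real.cosh (Real.log ‖y‖ - Real.log ‖z‖) :=
      lt_of_le_of_lt (Real.cos_le_one _) (Real.one_lt_cosh.2 (by linarith))
    apply lt_of_pow_lt_pow_left₀ 2 dist_nonneg
    rw [hdist x hx, hdist y hy]
    set A := Real.cosh (Real.log ‖x‖ - Real.log ‖z‖) - Real.cos (angle x z)
    set B := Real.cosh (Real.log ‖y‖ - Real.log ‖z‖) - Real.cos (angle y z)
    have hAB : A ≤ B := by simp only [A, B]; linarith
    have hB : 0 < B := by simp only [B]; linarith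
    calc 2 * ‖x‖ * ‖z‖ * A ≤ 2 * ‖x‖ * ‖z‖ * B := by gcongr
      _ < 2 * ‖y‖ * ‖z‖ * B := by gcongr
  · exfalso
    push Not at hXY
    have hlxy := Real.log_le_log hY hXY
    have hαα : angle x z ≤ angle y z := by
      refine (sq_le_sq₀ (by assumption) (by assumption)).1 ?_
      nlinarith
    have hsin : ∀ p : EuclideanSpace ℝ (Fin n), 
        Real.sin (EuclideanGeometry.angle p z 0) * dist p z = Real.sin (angle p z) * ‖p‖ := by
      intro p
      have := EuclideanGeometry.law_sin (0 : EuclideanSpace ℝ (Fin n)) z p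
      rw [EuclideanGeometry.angle_comm 0 z p, dist_comm z p] at this
      rw [this]
      simp [EuclideanGeometry.angle]
    have hcos : ∀ p : EuclideanSpace ℝ (Fin n), 
        Real.cos (EuclideanGeometry.angle p z 0) * dist p z
          = ‖z‖ - Real.cos (angle p z) * ‖p‖ := by
      intro p
      have h1 : Real.cos (EuclideanGeometry.angle p z 0) * (dist p z * ‖z‖)
          = inner ℝ (p - z) (-z) := by
        rw [← cos_angle_mul_norm_mul_norm]
        simp [EuclideanGeometry.angle, dist_eq_norm]
      have h2 := cos_angle_mul_norm_mul_norm p z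
      rw [inner_neg_right, inner_sub_left, ← h2, real_inner_self_eq_norm_sq] at h1
      apply mul_right_cancel₀ hZ.ne'
      linarith
    have hzero : ∀ p q : EuclideanSpace ℝ (Fin n), q ≠ 0 → ‖z‖ ≤ ‖q‖ →
        angle p z ^ 2 + (Real.log ‖p‖ - Real.log ‖z‖) ^ 2
      = angle q z ^ 2 + (Real.log ‖q‖ - Real.log ‖z‖) ^ 2 → p = z → q = z := by
      rintro p q hq hzq h rfl
      rw [angle_self hz, sub_self] at h
      have h1 : angle q p = 0 := by nlinarith
      have h2 : Real.log ‖q‖ - Real.log ‖p‖ = 0 := by nlinarith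
      have h3 := hdist q hq
      rw [h1, h2] at h3
      simpa using h3
    have hxz : x ≠ z := by
      intro h
      have := hzero x y hy hzy hk h
      rw [h, this] at hang
      exact lt_irrefl _ hang
    have hyz : y ≠ z := fun h => hxz (hzero y x hx hzx hk.symm h)
    have hdx : 0 < dist x z := dist_pos.2 hxz
    have hdy : 0 < dist y z := dist_pos.2 hyz
    have sx := hsin x
    have sy := hsin y
    have cx := hcos x
    have cy := hcos y
    have tx0 := EuclideanGeometry.angle_nonneg x z 0
    have typ := EuclideanGeometry.angle_le_pi y z 0
    set θx := EuclideanGeometry.angle x z 0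
    set θy := EuclideanGeometry.angle y z 0
    set a := angle x z
    set b := angle y z
    have hsa := Real.sin_nonneg_of_nonneg_of_le_pi hax0 haxp
    have hsd := Real.sin_nonneg_of_nonneg_of_le_pi (x := b - a) (by linarith) (by linarith)
    have hsb : Real.sin b ≤ Real.sin a + Real.sin (b - a) := by
      have : Real.sin b = Real.sin a * Real.cos (b - a) + Real.cos a * Real.sin (b - a) := by
        rw [← Real.sin_add]; congr 1; ring
      rw [this]
      nlinarith [Real.cos_le_one a, Real.cos_le_one (b - a)]
    have key : 0 ≤ Real.sin (θx - θy) * (dist x z * dist y z) := by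
      have e : Real.sin (θx - θy) * (dist x z * dist y z)
          = ‖x‖ * ‖z‖ * Real.sin a - ‖y‖ * ‖z‖ * Real.sin b
            + ‖x‖ * ‖y‖ * Real.sin (b - a) := by
        rw [Real.sin_sub, Real.sin_sub]
        calc _ = (Real.sin θx * dist x z) * (Real.cos θy * dist y z)
              - (Real.cos θx * dist x z) * (Real.sin θy * dist y z) := by ring
          _ = _ := by rw [sx, sy, cx, cy]; ring
      rw [e]
      have h1 : ‖y‖ * ‖z‖ * Real.sin b ≤ ‖y‖ * ‖z‖ * (Real.sin a + Real.sin (b - a)) := by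
        gcongr
      have h2 : ‖y‖ * ‖z‖ * Real.sin a ≤ ‖x‖ * ‖z‖ * Real.sin a := by gcongr
      have h3 : ‖y‖ * ‖z‖ * Real.sin (b - a) ≤ ‖y‖ * ‖x‖ * Real.sin (b - a) := by gcongr
      linarith
    have key2 : 0 ≤ Real.sin (θx - θy) := nonneg_of_mul_nonneg_left key (by positivity)
    have hpi : θy - θx = Real.pi := by
      by_contra hne
      have : θy - θx < Real.pi := lt_of_le_of_ne (by linarith) hne
      have := Real.sin_pos_of_pos_of_lt_pi (x := θy - θx) (by linarith) this
      rw [← neg_sub, Real.sin_neg] at this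
      linarith
    have e1 : θx = 0 := by linarith
    have e2 : θy = Real.pi := by linarith
    rw [e1, Real.sin_zero, zero_mul] at sx
    rw [e1, Real.cos_zero] at cx
    rw [e2, Real.cos_pi] at cy
    have hsa0 : Real.sin a = 0 := by
      rcases mul_eq_zero.1 sx.symm with h | h
      · exact h
      · exact absurd h hX.ne'
    have hcc : Real.cos b ≤ Real.cos a := Real.cos_le_cos_of_nonneg_of_le_pi hax0 hayp hαα
    have hca : Real.cos a = 1 ∨ Real.cos a = -1 := by
      have := Real.sin_sq_add_cos_sq a
      rw [hsa0] at this
      exact sq_eq_one_iff.1 (by linarith)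
    rcases hca with h | h
    · rw [h] at cx; linarith
    · have : Real.cos b = -1 := le_antisymm (by linarith) (Real.neg_one_le_cos b)
      rw [this] at cy
      linarith

lemma aux_bdist {n : ℕ} (hn : 2 ≤ n) (x : EuclideanSpace ℝ (Fin n)) :
    bdist ({0}ᶜ : Set (EuclideanSpace ℝ (Fin n))) x = ‖x‖ := by
  have : Nonempty (Fin n) := ⟨⟨0, by omega⟩⟩
  have : Nontrivial (EuclideanSpace ℝ (Fin n)) := by
    refine Module.nontrivial_of_finrank_pos (R := ℝ) ?_
    rw [finrank_euclideanSpace, Fintype.card_fin]; omega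
  have hi : interior ({0} : Set (EuclideanSpace ℝ (Fin n))) = ∅ := by
    have : (nhdsWithin (0 : EuclideanSpace ℝ (Fin n)) {0}ᶜ).NeBot :=
      Module.punctured_nhds_neBot ℝ _ _
    exact interior_singleton _
  unfold bdist
  rw [frontier_compl, frontier, closure_singleton, hi, sdiff_empty, infDist_singleton,
    dist_zero_right]

lemma aux_gram {n : ℕ} (g v w : EuclideanSpace ℝ (Fin n)) (hg : g ≠ 0) (hw : ‖w‖ = 1) :
    (inner ℝ v w * ‖g‖ ^ 2 - inner ℝ g w * inner ℝ g v) ^ 2 ≤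
      (‖g‖ ^ 2 - inner ℝ g w ^ 2) * (‖g‖ ^ 2 * ‖v‖ ^ 2 - inner ℝ g v ^ 2) := by
  have hN : 0 < ‖g‖ := norm_pos_iff.2 hg
  have h := real_inner_mul_inner_self_le (‖g‖ ^ 2 • v - (inner ℝ g v : ℝ) • g)
    (‖g‖ ^ 2 • w - (inner ℝ g w : ℝ) • g)
  simp only [inner_sub_left, inner_sub_right, real_inner_smul_left, real_inner_smul_right] at h
  simp only [real_inner_self_eq_norm_sq, hw, real_inner_comm g v, real_inner_comm g w] at h
  have h4 : 0 < ‖g‖ ^ 4 := by positivity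
  refine le_of_mul_le_mul_left ?_ h4
  nlinarith [h]

/-- pointwise derivative bound -/
lemma aux_point {N q p m V k a b : ℝ} (hN : 0 < N) (hq : q ^ 2 ≤ N ^ 2)
    (hk1 : k ^ 2 < 1)
    (hG : (m * N ^ 2 - q * p) ^ 2 ≤ (N ^ 2 - q ^ 2) * (N ^ 2 * V ^ 2 - p ^ 2))
    (hp : p ^ 2 ≤ N ^ 2 * V ^ 2) (hV : 0 ≤ V) :
    -(a * (-(1 / √(1 - (k * (q / N)) ^ 2)) * (k * ((m * N - q * (p / N)) / N ^ 2)))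
        + b * ((p / N) / N))
      ≤ √(a ^ 2 + b ^ 2) * (V / N) := by
  have hR : 0 < N ^ 2 - k ^ 2 * q ^ 2 := by
    have : 0 < N ^ 2 := by positivity
    nlinarith [sq_nonneg k, sq_nonneg q]
  have hS2 : 1 - (k * (q / N)) ^ 2 = (N ^ 2 - k ^ 2 * q ^ 2) / N ^ 2 := by
    field_simp
  have hSpos : 0 < 1 - (k * (q / N)) ^ 2 := by rw [hS2]; positivity
  set S := √(1 - (k * (q / N)) ^ 2) with hS
  have hS0 : 0 < S := Real.sqrt_pos.2 hSpos
  have hSS : S ^ 2 = (N ^ 2 - k ^ 2 * q ^ 2) / N ^ 2 := by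
    rw [hS, Real.sq_sqrt hSpos.le, hS2]
  set K := k * ((m * N - q * (p / N)) / N ^ 2) / S with hK
  have hKP : K ^ 2 + (p / N ^ 2) ^ 2 ≤ (V / N) ^ 2 := by
    have e : K ^ 2 = k ^ 2 * (m * N ^ 2 - q * p) ^ 2 / (N ^ 4 * (N ^ 2 - k ^ 2 * q ^ 2)) := by
      rw [hK, div_pow, hSS]
      field_simp
    have h1 : k ^ 2 * (m * N ^ 2 - q * p) ^ 2
        ≤ (N ^ 2 - k ^ 2 * q ^ 2) * (N ^ 2 * V ^ 2 - p ^ 2) := by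
      have h2 := mul_le_mul_of_nonneg_left hG (sq_nonneg k)
      have h3 : 0 ≤ (1 - k ^ 2) * N ^ 2 * (N ^ 2 * V ^ 2 - p ^ 2) :=
        mul_nonneg (mul_nonneg (by linarith) (by positivity)) (by linarith)
      nlinarith
    have h2 : K ^ 2 ≤ (N ^ 2 * V ^ 2 - p ^ 2) / N ^ 4 := by
      rw [e, div_le_div_iff₀ (by positivity) (by positivity)]
      have : 0 ≤ N ^ 4 := by positivity
      nlinarith
    have h3 : (N ^ 2 * V ^ 2 - p ^ 2) / N ^ 4 = (V / N) ^ 2 - (p / N ^ 2) ^ 2 := by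
      field_simp
    linarith
  have e : -(a * (-(1 / S) * (k * ((m * N - q * (p / N)) / N ^ 2))) + b * ((p / N) / N))
      = a * K - b * (p / N ^ 2) := by
    rw [hK]; field_simp; ring
  rw [e]
  apply le_of_abs_le
  apply abs_le_of_sq_le_sq _ (by positivity)
  rw [mul_pow, Real.sq_sqrt (by positivity)]
  have h1 : (a ^ 2 + b ^ 2) * (K ^ 2 + (p / N ^ 2) ^ 2) ≤ (a ^ 2 + b ^ 2) * (V / N) ^ 2 := by
    gcongr
  nlinarith [sq_nonneg (a * (p / N ^ 2) + b * K)]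

open InnerProductGeometry Filter Topology in
lemma aux_lower {n : ℕ} (x z : EuclideanSpace ℝ (Fin n)) (hx : x ≠ 0) (hz : z ≠ 0)
    (γ : ℝ → EuclideanSpace ℝ (Fin n)) (h0 : γ 0 = x) (h1 : γ 1 = z)
    (hγ : ∀ t ∈ Icc (0:ℝ) 1, γ t ≠ 0) (hc : ContDiffOn ℝ 1 γ (Icc 0 1)) :
    √(angle x z ^ 2 + (Real.log ‖x‖ - Real.log ‖z‖) ^ 2)
      ≤ ∫ t in (0:ℝ)..1, ‖deriv γ t‖ / ‖γ t‖ := by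
  have hZ : 0 < ‖z‖ := norm_pos_iff.2 hz
  set w : EuclideanSpace ℝ (Fin n) := ‖z‖⁻¹ • z with hwdef
  have hw : ‖w‖ = 1 := by
    rw [hwdef, norm_smul, norm_inv, norm_norm, inv_mul_cancel₀ hZ.ne']
  set a := angle x z
  set b := Real.log ‖x‖ - Real.log ‖z‖
  set len := ∫ t in (0:ℝ)..1, ‖deriv γ t‖ / ‖γ t‖ with hlen
  have hlen0 : 0 ≤ len := intervalIntegral.integral_nonneg (by norm_num) (fun t _ => by positivity)
  have hγc : ContinuousOn γ (Icc 0 1) := hc.continuousOn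
  have hintg : MeasureTheory.IntegrableOn (fun t => ‖deriv γ t‖ / ‖γ t‖) (Icc 0 1) := by
    have hd : ContinuousOn (fun t => ‖derivWithin γ (Icc 0 1) t‖ / ‖γ t‖) (Icc 0 1) := by
      refine ContinuousOn.div ?_ hγc.norm (fun t ht => (norm_pos_iff.2 (hγ t ht)).ne')
      exact (hc.continuousOn_derivWithin (uniqueDiffOn_Icc (by norm_num)) le_rfl).norm
    have := hd.integrableOn_compact isCompact_Icc (μ := MeasureTheory.volume)
    rw [integrableOn_Icc_iff_integrableOn_Ioo] at this ⊢
    refine this.congr_fun ?_ measurableSet_Ioo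
    intro t ht
    simp only
    rw [derivWithin_of_mem_nhds (Icc_mem_nhds ht.1 ht.2)]
  have main : ∀ k : ℝ, 0 < k → k < 1 →
      a * (Real.arccos (k * Real.cos a) - Real.arccos k) + b * b ≤ √(a ^ 2 + b ^ 2) * len := by
    intro k hk0 hk1
    have hq : ∀ g : EuclideanSpace ℝ (Fin n), (inner ℝ g w : ℝ) ^ 2 ≤ ‖g‖ ^ 2 := by
      intro g
      have := abs_real_inner_le_norm g w
      rw [hw, mul_one] at this
      exact sq_le_sq' (by linarith [neg_abs_le (inner ℝ g w : ℝ)]) (le_of_abs_le this)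
    have h := intervalIntegral.sub_le_integral_of_hasDeriv_right_of_le (a := (0:ℝ)) (b := 1)
      (g := fun t => -(a * Real.arccos (k * (inner ℝ (γ t) w / ‖γ t‖)) + b * Real.log ‖γ t‖))
      (g' := fun t => -(a * (-(1 / √(1 - (k * (inner ℝ (γ t) w / ‖γ t‖)) ^ 2)) *
          (k * ((inner ℝ (deriv γ t) w * ‖γ t‖
            - inner ℝ (γ t) w * (inner ℝ (γ t) (deriv γ t) / ‖γ t‖)) / ‖γ t‖ ^ 2)))
        + b * ((inner ℝ (γ t) (deriv γ t) / ‖γ t‖) / ‖γ t‖)))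
      (φ := fun t => √(a ^ 2 + b ^ 2) * (‖deriv γ t‖ / ‖γ t‖)) (by norm_num) ?_ ?_
      (hintg.const_mul _) ?_
    · rw [intervalIntegral.integral_const_mul, ← hlen] at h
      simp only [h0, h1] at h
      have e1 : inner ℝ z w / ‖z‖ = 1 := by
        rw [hwdef, real_inner_smul_right, real_inner_self_eq_norm_sq]
        field_simp
      have e2 : inner ℝ x w / ‖x‖ = Real.cos a := by
        rw [hwdef, real_inner_smul_right, cos_angle]
        field_simp
      rw [e1, e2, mul_one] at h
      have : b * b = b * Real.log ‖x‖ - b * Real.log ‖z‖ := by simp only [b]; ring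
      linarith
    · refine ContinuousOn.neg (ContinuousOn.add ?_ ?_)
      · refine continuousOn_const.mul (Real.continuous_arccos.comp_continuousOn ?_)
        refine continuousOn_const.mul (ContinuousOn.div ?_ hγc.norm
          (fun t ht => (norm_pos_iff.2 (hγ t ht)).ne'))
        exact hγc.inner continuousOn_const
      · exact continuousOn_const.mul (hγc.norm.log (fun t ht => (norm_pos_iff.2 (hγ t ht)).ne'))
    · intro t ht
      have hN : 0 < ‖γ t‖ := norm_pos_iff.2 (hγ t (Ioo_subset_Icc_self ht))
      have hd : HasDerivAt γ (deriv γ t) t :=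
        ((hc.differentiableOn one_ne_zero).differentiableAt
          (Icc_mem_nhds ht.1 ht.2)).hasDerivAt
      have hdn : HasDerivAt (fun t => ‖γ t‖) (inner ℝ (γ t) (deriv γ t) / ‖γ t‖) t := by
        have := (hd.norm_sq).sqrt (by positivity)
        have e : (fun t => ‖γ t‖) = fun y => √((fun t => ‖γ t‖ ^ 2) y) := by
          funext y; simp
        rw [e]
        refine this.congr_deriv ?_
        rw [Real.sqrt_sq hN.le]
        field_simp
      have hdi : HasDerivAt (fun t => (inner ℝ (γ t) w : ℝ)) (inner ℝ (deriv γ t) w) t := by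
        have := hd.inner ℝ (hasDerivAt_const t w)
        simpa using this
      have hdq := hdi.div hdn hN.ne'
      have hlt : (k * (inner ℝ (γ t) w / ‖γ t‖)) ^ 2 < 1 := by
        have := hq (γ t)
        rw [mul_pow, div_pow]
        have h2 : (inner ℝ (γ t) w : ℝ) ^ 2 / ‖γ t‖ ^ 2 ≤ 1 := (div_le_one (by positivity)).2 this
        have h3 : 0 ≤ (inner ℝ (γ t) w : ℝ) ^ 2 / ‖γ t‖ ^ 2 := by positivity
        nlinarith
      have hda := (Real.hasDerivAt_arccos (x := k * (inner ℝ (γ t) w / ‖γ t‖))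
        (by intro h; rw [h] at hlt; norm_num at hlt)
        (by intro h; rw [h] at hlt; norm_num at hlt)).comp t (hdq.const_mul k)
      exact (((hda.const_mul a).add ((hdn.log hN.ne').const_mul b)).neg).hasDerivWithinAt
    · intro t ht
      have hg := hγ t (Ioo_subset_Icc_self ht)
      refine aux_point (norm_pos_iff.2 hg) (hq _) (by nlinarith) (aux_gram _ _ _ hg hw) ?_
        (norm_nonneg _)
      rw [← mul_pow]
      have := abs_real_inner_le_norm (γ t) (deriv γ t)
      exact sq_le_sq' (by linarith [neg_abs_le (inner ℝ (γ t) (deriv γ t) : ℝ)])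
        (le_of_abs_le this)
  have hlim : a * a + b * b ≤ √(a ^ 2 + b ^ 2) * len := by
    have hcont : Continuous fun k : ℝ =>
        a * (Real.arccos (k * Real.cos a) - Real.arccos k) + b * b := by
      have := Real.continuous_arccos
      fun_prop
    have ht : Tendsto (fun k : ℝ => a * (Real.arccos (k * Real.cos a) - Real.arccos k) + b * b)
        (𝓝[<] 1) (𝓝 (a * a + b * b)) := by
      have := hcont.tendsto 1
      rw [one_mul, Real.arccos_one, Real.arccos_cos (angle_nonneg x z) (angle_le_pi x z),
        sub_zero] at this
      exact this.mono_left nhdsWithin_le_nhds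
    refine le_of_tendsto ht ?_
    filter_upwards [Ioo_mem_nhdsLT (show (0:ℝ) < 1 by norm_num)] with k hk
    exact main k hk.1 hk.2
  rcases (Real.sqrt_nonneg (a ^ 2 + b ^ 2)).eq_or_lt with h | h
  · rw [← h]; exact hlen0
  · refine le_of_mul_le_mul_left ?_ h
    rw [Real.mul_self_sqrt (by positivity)]
    linarith

open InnerProductGeometry in
lemma aux_perp {n : ℕ} (hn : 2 ≤ n) (u w : EuclideanSpace ℝ (Fin n)) (hu : ‖u‖ = 1)
    (hw : ‖w‖ = 1) : ∃ e : EuclideanSpace ℝ (Fin n), ‖e‖ = 1 ∧ inner ℝ w e = (0:ℝ) ∧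
      u = Real.cos (angle u w) • w + Real.sin (angle u w) • e := by
  have hc : Real.cos (angle u w) = inner ℝ u w := by rw [cos_angle, hu, hw]; simp
  set α := angle u w
  have hn2 : ‖u - Real.cos α • w‖ ^ 2 = Real.sin α ^ 2 := by
    rw [@norm_sub_sq_real, real_inner_smul_right, ← hc, norm_smul, hu, hw, Real.sin_sq]
    simp
    ring
  by_cases hs : Real.sin α = 0
  · rw [hs] at hn2
    have hu' : u = Real.cos α • w := by
      have : ‖u - Real.cos α • w‖ = 0 := by nlinarith [norm_nonneg (u - Real.cos α • w)]
      exact sub_eq_zero.1 (norm_eq_zero.1 this)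
    have hne : (Submodule.span ℝ {w})ᗮ ≠ ⊥ := by
      intro h
      rw [Submodule.orthogonal_eq_bot_iff] at h
      have h1 := finrank_span_singleton (K := ℝ) (v := w) (by intro h; simp [h] at hw)
      rw [h, finrank_top, finrank_euclideanSpace, Fintype.card_fin] at h1
      omega
    obtain ⟨f, hf, hf0⟩ := Submodule.exists_mem_ne_zero_of_ne_bot hne
    have hfw := Submodule.mem_orthogonal_singleton_iff_inner_right.1 hf
    have hfn : ‖f‖ ≠ 0 := norm_ne_zero_iff.2 hf0
    refine ⟨‖f‖⁻¹ • f, ?_, ?_, ?_⟩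
    · rw [norm_smul, norm_inv, norm_norm, inv_mul_cancel₀ hfn]
    · rw [real_inner_smul_right, hfw, mul_zero]
    · rw [hs, zero_smul, add_zero]; exact hu'
  · refine ⟨(Real.sin α)⁻¹ • (u - Real.cos α • w), ?_, ?_, ?_⟩
    · have : ‖(Real.sin α)⁻¹ • (u - Real.cos α • w)‖ ^ 2 = 1 := by
        rw [norm_smul, mul_pow, hn2, norm_inv, inv_pow, Real.norm_eq_abs, sq_abs]
        field_simp
      exact (pow_eq_one_iff_of_nonneg (norm_nonneg _) two_ne_zero).1 this
    · rw [real_inner_smul_right, inner_sub_right, real_inner_smul_right,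
        real_inner_self_eq_norm_sq, hw, real_inner_comm, ← hc]
      ring
    · rw [smul_smul, mul_inv_cancel₀ hs, one_smul]; abel

open InnerProductGeometry in
lemma aux_upper {n : ℕ} (hn : 2 ≤ n) (x z : EuclideanSpace ℝ (Fin n)) (hx : x ≠ 0)
    (hz : z ≠ 0) : ∃ γ : ℝ → EuclideanSpace ℝ (Fin n), γ 0 = x ∧ γ 1 = z ∧
      (∀ t, γ t ≠ 0) ∧ ContDiff ℝ 1 γ ∧
      ∀ t, ‖deriv γ t‖ / ‖γ t‖
        = √(angle x z ^ 2 + (Real.log ‖x‖ - Real.log ‖z‖) ^ 2) := by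
  have hX : 0 < ‖x‖ := norm_pos_iff.2 hx
  have hZ : 0 < ‖z‖ := norm_pos_iff.2 hz
  obtain ⟨e, he, hwe, hu⟩ := aux_perp hn (‖x‖⁻¹ • x) (‖z‖⁻¹ • z)
    (by rw [norm_smul, norm_inv, norm_norm, inv_mul_cancel₀ hX.ne'])
    (by rw [norm_smul, norm_inv, norm_norm, inv_mul_cancel₀ hZ.ne'])
  rw [angle_smul_left_of_pos _ _ (by positivity), angle_smul_right_of_pos _ _ (by positivity)]
    at hu
  have hw : ‖‖z‖⁻¹ • z‖ = 1 := by rw [norm_smul, norm_inv, norm_norm, inv_mul_cancel₀ hZ.ne']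
  have hzw : z = ‖z‖ • (‖z‖⁻¹ • z) := by rw [smul_smul, mul_inv_cancel₀ hZ.ne', one_smul]
  have hxu : x = ‖x‖ • (‖x‖⁻¹ • x) := by rw [smul_smul, mul_inv_cancel₀ hX.ne', one_smul]
  set w := ‖z‖⁻¹ • z
  set a := angle x z
  set lx := Real.log ‖x‖ with hlx
  set lz := Real.log ‖z‖ with hlz
  have hnorm : ∀ p q : ℝ, ‖p • w + q • e‖ = √(p ^ 2 + q ^ 2) := by
    intro p q
    rw [← Real.sqrt_sq (norm_nonneg (p • w + q • e)), @norm_add_sq_real, real_inner_smul_left,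
      real_inner_smul_right, hwe, norm_smul p w, norm_smul q e, hw, he]
    simp
  have hnγ : ∀ t : ℝ, ‖Real.exp (lx + t * (lz - lx)) • (Real.cos (a * (1 - t)) • w
      + Real.sin (a * (1 - t)) • e)‖ = Real.exp (lx + t * (lz - lx)) := by
    intro t
    rw [norm_smul, hnorm, Real.cos_sq_add_sin_sq]
    simp
  refine ⟨fun t => Real.exp (lx + t * (lz - lx)) • (Real.cos (a * (1 - t)) • w
    + Real.sin (a * (1 - t)) • e), ?_, ?_, ?_, ?_, ?_⟩
  · simp only [zero_mul, add_zero, sub_zero, mul_one]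
    rw [← hu, hlx, Real.exp_log hX]; exact hxu.symm
  · simp only [one_mul, sub_self, mul_zero, Real.cos_zero, Real.sin_zero, one_smul, zero_smul,
      add_zero, add_sub_cancel]
    rw [hlz, Real.exp_log hZ]; exact hzw.symm
  · intro t
    rw [← norm_pos_iff, hnγ]
    positivity
  · fun_prop
  · intro t
    simp only
    rw [hnγ]
    have hd1 : HasDerivAt (fun t : ℝ => Real.exp (lx + t * (lz - lx)))
        (Real.exp (lx + t * (lz - lx)) * (lz - lx)) t := by
      have := (((hasDerivAt_id t).mul_const (lz - lx)).const_add lx).exp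
      simpa using this
    have hl : HasDerivAt (fun t : ℝ => a * (1 - t)) (-a) t := by
      have := ((hasDerivAt_id t).const_sub 1).const_mul a
      simpa using this
    have hd := hd1.smul ((hl.cos.smul_const w).add (hl.sin.smul_const e))
    have hd' := hd.deriv
    simp only [Pi.add_apply] at hd'
    have e1 : deriv (fun t : ℝ => Real.exp (lx + t * (lz - lx)) • (Real.cos (a * (1 - t)) • w
        + Real.sin (a * (1 - t)) • e)) t = Real.exp (lx + t * (lz - lx)) •
          (((lz - lx) * Real.cos (a * (1 - t)) + a * Real.sin (a * (1 - t))) • w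
          + ((lz - lx) * Real.sin (a * (1 - t)) - a * Real.cos (a * (1 - t))) • e) := by
      refine Eq.trans hd' ?_
      module
    rw [e1, norm_smul, hnorm, Real.norm_eq_abs, Real.abs_exp,
      mul_div_cancel_left₀ _ (Real.exp_pos _).ne']
    congr 1
    have := Real.cos_sq_add_sin_sq (a * (1 - t))
    linear_combination ((lz - lx) ^ 2 + a ^ 2) * this

open InnerProductGeometry in
lemma aux_formula {n : ℕ} (hn : 2 ≤ n) (x z : EuclideanSpace ℝ (Fin n)) (hx : x ≠ 0)
    (hz : z ≠ 0) : qhDist ({0}ᶜ : Set (EuclideanSpace ℝ (Fin n))) x z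
      = √(angle x z ^ 2 + (Real.log ‖x‖ - Real.log ‖z‖) ^ 2) := by
  obtain ⟨γ, g0, g1, g2, g3, g4⟩ := aux_upper hn x z hx hz
  have hmem : γ 0 = x ∧ γ 1 = z ∧
      (∀ t ∈ Set.Icc (0:ℝ) 1, γ t ∈ ({0}ᶜ : Set (EuclideanSpace ℝ (Fin n)))) ∧
      ContDiffOn ℝ 1 γ (Set.Icc 0 1) := ⟨g0, g1, fun t _ => by simpa using g2 t, g3.contDiffOn⟩
  unfold qhDist
  have hlow : ∀ γ : {γ : ℝ → EuclideanSpace ℝ (Fin n) // γ 0 = x ∧ γ 1 = z ∧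
      (∀ t ∈ Set.Icc (0:ℝ) 1, γ t ∈ ({0}ᶜ : Set (EuclideanSpace ℝ (Fin n)))) ∧
      ContDiffOn ℝ 1 γ (Set.Icc 0 1)},
      √(angle x z ^ 2 + (Real.log ‖x‖ - Real.log ‖z‖) ^ 2) ≤ qhLength {0}ᶜ γ.1 := by
    rintro ⟨γ, h0, h1, h2, h3⟩
    unfold qhLength
    simp only [aux_bdist hn]
    exact aux_lower x z hx hz γ h0 h1 (fun t ht => by simpa using h2 t ht) h3
  apply le_antisymm
  · refine (ciInf_le ⟨_, by rintro _ ⟨g, rfl⟩; exact hlow g⟩ ⟨γ, hmem⟩).trans ?_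
    unfold qhLength
    simp only [aux_bdist hn, g4]
    simp
  · have : Nonempty {γ : ℝ → EuclideanSpace ℝ (Fin n) // γ 0 = x ∧ γ 1 = z ∧
      (∀ t ∈ Set.Icc (0:ℝ) 1, γ t ∈ ({0}ᶜ : Set (EuclideanSpace ℝ (Fin n)))) ∧
      ContDiffOn ℝ 1 γ (Set.Icc 0 1)} := ⟨⟨γ, hmem⟩⟩
    exact le_ciInf hlow

theorem stmt_5 (n : ℕ) (hn : 2 ≤ n) (x y z : EuclideanSpace ℝ (Fin n))
    (hx : x ≠ 0) (hy : y ≠ 0) (hz : z ≠ 0)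
    (hk : qhDist ({0}ᶜ : Set (EuclideanSpace ℝ (Fin n))) x z =
          qhDist ({0}ᶜ : Set (EuclideanSpace ℝ (Fin n))) y z)
    (hzx : ‖z‖ ≤ ‖x‖) (hzy : ‖z‖ ≤ ‖y‖)
    (hang : EuclideanGeometry.angle x z 0 < EuclideanGeometry.angle y z 0) :
    dist x z < dist y z := by

  rw [aux_formula hn x z hx hz, aux_formula hn y z hy hz,
    Real.sqrt_inj (by positivity) (by positivity)] at hk
  exact aux_geom x y z hx hy hz hk hzx hzy hang
end

section
/- Let n ≥ 2 and G = ℝⁿ \ {0}. For every α ∈ (0, π] and all x, y ∈ G with ∠(x, 0, y) ≤ α, one has k_G(x,y) ≤ (α / log(1 + 2 sin(α/2))) · j_G(x,y) ≤ (1 + α) · j_G(x,y). -/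
open Set Metric

lemma core_ineq (σ : ℝ) (hσ : 0 < σ) (L : ℝ) (hL : 0 ≤ L) :
    Real.log (1 + σ) / σ * Real.sqrt (σ ^ 2 + L ^ 2) ≤
      Real.log (1 + Real.sqrt ((Real.exp L - 1) ^ 2 + σ ^ 2 * Real.exp L)) := by
  set l := Real.log (1 + σ) / σ with hl
  have hl0 : 0 ≤ l := div_nonneg (Real.log_nonneg (by linarith)) hσ.le
  have hl1 : l ≤ 1 := by
    rw [hl, div_le_one hσ]
    have := Real.log_le_sub_one_of_pos (show 0 < 1 + σ by linarith)
    linarith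
  let F : ℝ → ℝ := fun L => Real.log (1 + Real.sqrt ((Real.exp L - 1) ^ 2 + σ ^ 2 * Real.exp L))
    - l * Real.sqrt (σ ^ 2 + L ^ 2)
  have hP : ∀ L : ℝ, 0 < (Real.exp L - 1) ^ 2 + σ ^ 2 * Real.exp L := fun L => by positivity
  have hQ : ∀ L : ℝ, 0 < σ ^ 2 + L ^ 2 := fun L => by positivity
  have hd : ∀ L : ℝ, HasDerivAt F
      ((2 * (Real.exp L - 1) * Real.exp L + σ ^ 2 * Real.exp L) /
        (2 * Real.sqrt ((Real.exp L - 1) ^ 2 + σ ^ 2 * Real.exp L)) /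
        (1 + Real.sqrt ((Real.exp L - 1) ^ 2 + σ ^ 2 * Real.exp L))
        - l * ((2 * L) / (2 * Real.sqrt (σ ^ 2 + L ^ 2)))) L := by
    intro L
    have h1 : HasDerivAt (fun L : ℝ => (Real.exp L - 1) ^ 2 + σ ^ 2 * Real.exp L)
        (2 * (Real.exp L - 1) * Real.exp L + σ ^ 2 * Real.exp L) L := by
      have := (((Real.hasDerivAt_exp L).sub_const 1).pow 2).add
        ((Real.hasDerivAt_exp L).const_mul (σ ^ 2))
      exact this.congr_deriv (by norm_num)
    have h2 : HasDerivAt (fun L : ℝ => σ ^ 2 + L ^ 2) (2 * L) L := by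
      have := ((hasDerivAt_id L).pow 2).const_add (σ ^ 2)
      exact this.congr_deriv (by norm_num)
    have h3 := ((h1.sqrt (hP L).ne').const_add 1).log
      (by have := Real.sqrt_nonneg ((Real.exp L - 1) ^ 2 + σ ^ 2 * Real.exp L); positivity)
    exact h3.sub ((h2.sqrt (hQ L).ne').const_mul l)
  have hmono : MonotoneOn F (Ici 0) := by
    apply monotoneOn_of_deriv_nonneg (convex_Ici 0)
    · exact fun L _ => (hd L).continuousAt.continuousWithinAt
    · exact fun L _ => (hd L).differentiableAt.differentiableWithinAt
    · intro L hL
      rw [interior_Ici] at hL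
      have hL : 0 < L := hL
      rw [(hd L).deriv]
      have hDs := Real.sq_sqrt (hP L).le
      have hDp := Real.sqrt_pos.2 (hP L)
      have hMs := Real.sq_sqrt (hQ L).le
      have hMp := Real.sqrt_pos.2 (hQ L)
      set D := Real.sqrt ((Real.exp L - 1) ^ 2 + σ ^ 2 * Real.exp L)
      set M := Real.sqrt (σ ^ 2 + L ^ 2)
      have hE1 : 1 + L ≤ Real.exp L := by have := Real.add_one_le_exp L; linarith
      -- L ^ 2 * E ≤ (E - 1) ^ 2
      have hLE : L ^ 2 * Real.exp L ≤ (Real.exp L - 1) ^ 2 := by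
        have hs : L / 2 ≤ Real.sinh (L / 2) := Real.self_le_sinh_iff.2 (by positivity)
        rw [Real.sinh_eq] at hs
        have hp := Real.exp_pos (L / 2)
        have hn : Real.exp (-(L / 2)) * Real.exp (L / 2) = 1 := by
          rw [← Real.exp_add]; simp
        have hE : Real.exp L = Real.exp (L / 2) ^ 2 := by
          rw [← Real.exp_nat_mul]; congr 1; push_cast; ring
        rw [hE]
        have h5 : L * Real.exp (L / 2) ≤ Real.exp (L / 2) ^ 2 - 1 := by nlinarith
        have h6 : 0 ≤ L * Real.exp (L / 2) := by positivity
        nlinarith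
      set E := Real.exp L
      have hE0 : 0 < E := Real.exp_pos L
      have hLM : L / M ≤ (E - 1) / D := by
        rw [div_le_div_iff₀ hMp hDp]
        apply le_of_sq_le_sq _ (by nlinarith) 
        rw [mul_pow, mul_pow, hDs, hMs]
        nlinarith [sq_nonneg σ]
      have e1 : 2 * L / (2 * M) = L / M := by field_simp
      rw [e1]
      have h7 : l * (L / M) ≤ (E - 1) / D := by
        have : 0 ≤ L / M := by positivity
        nlinarith
      have h8 : (E - 1) / D ≤ (2 * (E - 1) * E + σ ^ 2 * E) / (2 * D) / (1 + D) := by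
        rw [div_div, div_le_div_iff₀ hDp (by positivity)]
        have : (E - 1) * (2 * (1 + D)) ≤ 2 * (E - 1) * E + σ ^ 2 * E := by
          nlinarith [sq_nonneg (D - (E - 1))]
        nlinarith
      linarith
  have h0 : F 0 = 0 := by
    simp only [F, hl]
    simp [Real.sqrt_sq hσ.le]
    field_simp
    ring
  have := hmono (show (0:ℝ) ∈ Ici 0 by simp) hL hL
  rw [h0] at this
  simp only [F] at this
  linarith

lemma log_ratio_mono (θ α : ℝ) (h0 : 0 < θ) (h1 : θ ≤ α) (h2 : α ≤ Real.pi) :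
    θ / α * Real.log (1 + 2 * Real.sin (α / 2)) ≤ Real.log (1 + 2 * Real.sin (θ / 2)) := by
  have hα : 0 < α := by linarith
  have ht0 : 0 ≤ θ / α := by positivity
  have ht1 : θ / α ≤ 1 := by rw [div_le_one hα]; exact h1
  have hs0 : 0 < Real.sin (α / 2) := Real.sin_pos_of_pos_of_lt_pi (by linarith) (by linarith)
  have hs : θ / α * Real.sin (α / 2) ≤ Real.sin (θ / 2) := by
    have := strictConcaveOn_sin_Icc.concaveOn.2 (show (0:ℝ) ∈ Icc 0 Real.pi from ⟨le_refl _, Real.pi_pos.le⟩)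
      (show α / 2 ∈ Icc 0 Real.pi from ⟨by linarith, by linarith⟩)
      (show 0 ≤ 1 - θ / α by linarith) ht0 (by ring)
    simp only [smul_eq_mul, Real.sin_zero, mul_zero, zero_add] at this
    have e : θ / α * (α / 2) = θ / 2 := by field_simp
    rwa [e] at this
  rw [← Real.log_rpow (by positivity)]
  apply Real.log_le_log (by positivity)
  have := rpow_one_add_le_one_add_mul_self (s := 2 * Real.sin (α / 2)) (by linarith) ht0 ht1
  linarith

lemma second_ineq (α : ℝ) (h0 : 0 < α) (h2 : α ≤ Real.pi) :
    α / Real.log (1 + 2 * Real.sin (α / 2)) ≤ 1 + α := by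
  obtain ⟨β, rfl⟩ : ∃ β, α = 2 * β := ⟨α / 2, by ring⟩
  have e : 2 * β / 2 = β := by ring
  rw [e]
  have hβ : 0 < β := by linarith
  have hs0 : 0 < Real.sin β := Real.sin_pos_of_pos_of_lt_pi (by linarith) (by linarith)
  have hlog : 0 < Real.log (1 + 2 * Real.sin β) := Real.log_pos (by linarith)
  have hs : β ≤ Real.sin β * (1 + β) := by
    rcases le_total β 1 with h | h
    · have := Real.sin_gt_sub_cube hβ
      have h3 : (β - β ^ 3 / 6) * (1 + β) ≤ Real.sin β * (1 + β) := by gcongr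
      have : 0 ≤ β ^ 2 * (1 - β) := by have : 0 ≤ 1 - β := by linarith
                                       positivity
      have : 0 ≤ β ^ 3 * (1 - β) := by have : 0 ≤ 1 - β := by linarith
                                       positivity
      nlinarith
    · have h3 := Real.mul_le_sin hβ.le (by linarith)
      have h4 : 1 / 2 * β ≤ 2 / Real.pi * β := by
        refine mul_le_mul_of_nonneg_right ?_ hβ.le
        rw [div_le_div_iff₀ (by norm_num) Real.pi_pos]
        linarith [Real.pi_le_four]
      nlinarith
  rw [div_le_iff₀ hlog]
  have := Real.le_log_one_add_of_nonneg (x := 2 * Real.sin β) (by linarith)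
  have h5 : 2 * β ≤ (1 + 2 * β) * (2 * (2 * Real.sin β) / (2 * Real.sin β + 2)) := by
    rw [← mul_div_assoc, le_div_iff₀ (by linarith)]
    nlinarith
  have h6 : (1 + 2 * β) * (2 * (2 * Real.sin β) / (2 * Real.sin β + 2)) ≤
    (1 + 2 * β) * Real.log (1 + 2 * Real.sin β) := by gcongr
  linarith

lemma main_real (α θ a b d : ℝ) (hα : 0 < α) (hαπ : α ≤ Real.pi) (hθ : 0 ≤ θ) (hθα : θ ≤ α)
    (ha : 0 < a) (hab : a ≤ b) (hd : 0 ≤ d)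
    (hdd : d ^ 2 = a ^ 2 + b ^ 2 - 2 * (a * b * Real.cos θ)) :
    Real.sqrt (θ ^ 2 + (Real.log b - Real.log a) ^ 2) ≤
      α / Real.log (1 + 2 * Real.sin (α / 2)) * Real.log (1 + d / a) := by
  have hb : 0 < b := by linarith
  have hs0 : 0 < Real.sin (α / 2) :=
    Real.sin_pos_of_pos_of_lt_pi (by linarith) (by linarith [Real.pi_pos])
  have hlog : 0 < Real.log (1 + 2 * Real.sin (α / 2)) := Real.log_pos (by linarith)
  have hL : 0 ≤ Real.log b - Real.log a := by
    have := Real.log_le_log ha hab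
    linarith
  have hE : Real.exp (Real.log b - Real.log a) = b / a := by
    rw [Real.exp_sub, Real.exp_log hb, Real.exp_log ha]
  set L := Real.log b - Real.log a with hLdef
  have hJ0 : 0 ≤ Real.log (1 + d / a) := Real.log_nonneg (by
    have : 0 ≤ d / a := by positivity
    linarith)
  rcases hθ.eq_or_lt with h | h
  · subst h
    have hdb : d = b - a := by
      have : d ^ 2 = (b - a) ^ 2 := by rw [hdd, Real.cos_zero]; ring
      exact (sq_eq_sq₀ hd (by linarith)).1 this
    have e : 1 + d / a = Real.exp L := by rw [hE, hdb]; field_simp; ring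
    rw [e, Real.log_exp]
    have hC : 1 ≤ α / Real.log (1 + 2 * Real.sin (α / 2)) := by
      rw [le_div_iff₀ hlog]
      have := Real.log_le_sub_one_of_pos (show 0 < 1 + 2 * Real.sin (α / 2) by linarith)
      have := Real.sin_lt (show 0 < α / 2 by linarith)
      linarith
    have : Real.sqrt (0 ^ 2 + L ^ 2) = L := by
      rw [zero_pow two_ne_zero, zero_add, Real.sqrt_sq hL]
    rw [this]
    nlinarith
  · have ht0 : 0 < Real.sin (θ / 2) :=
      Real.sin_pos_of_pos_of_lt_pi (by linarith) (by linarith [Real.pi_pos])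
    have hmon := log_ratio_mono θ α h hθα hαπ
    have hcore := core_ineq (2 * Real.sin (θ / 2)) (by linarith) L hL
    have hσθ : 2 * Real.sin (θ / 2) ≤ θ := by
      have := Real.sin_lt (show 0 < θ / 2 by linarith)
      linarith
    have hlogθ : 0 < Real.log (1 + 2 * Real.sin (θ / 2)) := Real.log_pos (by linarith)
    have hcos : Real.cos θ = 1 - 2 * Real.sin (θ / 2) ^ 2 := by
      have := Real.cos_sq' (θ / 2)
      have h2 := Real.cos_two_mul (θ / 2)
      rw [show 2 * (θ / 2) = θ by ring] at h2
      linarith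
    have hD : Real.sqrt ((Real.exp L - 1) ^ 2 + (2 * Real.sin (θ / 2)) ^ 2 * Real.exp L) = d / a := by
      rw [Real.sqrt_eq_iff_mul_self_eq (by positivity) (by positivity), hE]
      rw [← sq, div_pow, hdd, hcos]
      field_simp
      ring
    rw [hD] at hcore
    set σ := 2 * Real.sin (θ / 2) with hσ
    have hσ0 : 0 < σ := by linarith
    have h1 : Real.sqrt (θ ^ 2 + L ^ 2) ≤ θ / σ * Real.sqrt (σ ^ 2 + L ^ 2) := by
      apply Real.sqrt_le_iff.2 ⟨by positivity, ?_⟩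
      rw [mul_pow, Real.sq_sqrt (by positivity), div_pow, mul_add, div_mul_cancel₀ _ (by positivity)]
      have : 1 ≤ θ ^ 2 / σ ^ 2 := by
        rw [one_le_div (by positivity)]
        gcongr
      nlinarith [sq_nonneg L]
    have h2 : θ / σ * Real.sqrt (σ ^ 2 + L ^ 2) ≤ θ / Real.log (1 + σ) * Real.log (1 + d / a) := by
      calc θ / σ * Real.sqrt (σ ^ 2 + L ^ 2)
          = θ / Real.log (1 + σ) * (Real.log (1 + σ) / σ * Real.sqrt (σ ^ 2 + L ^ 2)) := by
            field_simp
        _ ≤ _ := by gcongr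
    have h3 : θ / Real.log (1 + σ) ≤ α / Real.log (1 + 2 * Real.sin (α / 2)) := by
      rw [div_le_div_iff₀ hlogθ hlog]
      have : α * (θ / α * Real.log (1 + 2 * Real.sin (α / 2))) ≤ α * Real.log (1 + σ) := by gcongr
      have e : α * (θ / α * Real.log (1 + 2 * Real.sin (α / 2))) =
        θ * Real.log (1 + 2 * Real.sin (α / 2)) := by field_simp
      linarith
    calc _ ≤ _ := h1
      _ ≤ _ := h2
      _ ≤ _ := by gcongr

lemma bdist_punctured (n : ℕ) (hn : 2 ≤ n) (x : EuclideanSpace ℝ (Fin n)) :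
    bdist ({0}ᶜ : Set (EuclideanSpace ℝ (Fin n))) x = ‖x‖ := by
  have : Nonempty (Fin n) := ⟨⟨0, by omega⟩⟩
  have : Nontrivial (EuclideanSpace ℝ (Fin n)) := inferInstance
  have : (nhdsWithin (0 : EuclideanSpace ℝ (Fin n)) {0}ᶜ).NeBot :=
    Module.punctured_nhds_neBot ℝ _ 0
  unfold bdist
  rw [frontier_compl, frontier, interior_singleton, closure_singleton]
  simp

lemma exists_frame (n : ℕ) (hn : 2 ≤ n) (u v : EuclideanSpace ℝ (Fin n)) (hu : ‖u‖ = 1)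
    (hv : ‖v‖ = 1) : ∃ w : EuclideanSpace ℝ (Fin n), ‖w‖ = 1 ∧ inner ℝ u w = 0 ∧
      v = Real.cos (InnerProductGeometry.angle u v) • u +
        Real.sin (InnerProductGeometry.angle u v) • w := by
  set θ := InnerProductGeometry.angle u v with hθ
  have hc : inner ℝ u v = Real.cos θ := by
    rw [hθ, InnerProductGeometry.cos_angle, hu, hv]; simp
  have huu : inner ℝ u u = (1:ℝ) := by rw [real_inner_self_eq_norm_sq, hu]; norm_num
  have hnorm : ‖v - Real.cos θ • u‖ ^ 2 = Real.sin θ ^ 2 := by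
    rw [norm_sub_sq_real, norm_smul, inner_smul_right, real_inner_comm, hc, hu, hv, Real.sin_sq]
    simp
    ring
  have hs0 : 0 ≤ Real.sin θ := InnerProductGeometry.sin_angle_nonneg u v
  have hnorm' : ‖v - Real.cos θ • u‖ = Real.sin θ := (sq_eq_sq₀ (norm_nonneg _) hs0).1 hnorm
  by_cases hs : Real.sin θ = 0
  · have hv' : v = Real.cos θ • u := by
      rw [hs, norm_eq_zero, sub_eq_zero] at hnorm'
      exact hnorm'
    have : ∃ w : EuclideanSpace ℝ (Fin n), w ≠ 0 ∧ inner ℝ u w = 0 := by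
      have hrank : 0 < Module.finrank ℝ ((ℝ ∙ u)ᗮ : Submodule ℝ (EuclideanSpace ℝ (Fin n))) := by
        have h1 := Submodule.finrank_add_finrank_orthogonal (ℝ ∙ u)
        have h2 := finrank_span_singleton (K := ℝ) (v := u) (by
          intro h; rw [h] at hu; simp at hu)
        rw [h2, finrank_euclideanSpace_fin] at h1
        omega
      obtain ⟨w, hw⟩ := (Module.finrank_pos_iff_exists_ne_zero).1 hrank
      exact ⟨w.1, by simpa using hw, Submodule.mem_orthogonal_singleton_iff_inner_right.1 w.2⟩
    obtain ⟨w, hw, hw'⟩ := this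
    refine ⟨‖w‖⁻¹ • w, ?_, ?_, ?_⟩
    · rw [norm_smul, norm_inv, norm_norm, inv_mul_cancel₀ (norm_ne_zero_iff.2 hw)]
    · rw [inner_smul_right, hw', mul_zero]
    · rw [hs, zero_smul, add_zero]; exact hv'
  · refine ⟨(Real.sin θ)⁻¹ • (v - Real.cos θ • u), ?_, ?_, ?_⟩
    · rw [norm_smul, hnorm', norm_inv, Real.norm_of_nonneg hs0, inv_mul_cancel₀ hs]
    · rw [inner_smul_right, inner_sub_right, inner_smul_right, hc, huu]; ring
    · rw [smul_smul, mul_inv_cancel₀ hs, one_smul]; abel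

lemma norm_comb (n : ℕ) (u w : EuclideanSpace ℝ (Fin n)) (hu : ‖u‖ = 1)
    (hw : ‖w‖ = 1) (h : inner ℝ u w = (0:ℝ)) (p q : ℝ) :
    ‖p • u + q • w‖ = Real.sqrt (p ^ 2 + q ^ 2) := by
  symm
  rw [Real.sqrt_eq_iff_mul_self_eq (by positivity) (by positivity), ← sq, norm_add_sq_real,
    norm_smul, norm_smul, inner_smul_left, inner_smul_right, h, hu, hw]
  simp

lemma qhDist_le_s6 (n : ℕ) (hn : 2 ≤ n) (x y : EuclideanSpace ℝ (Fin n)) (hx : x ≠ 0) (hy : y ≠ 0) :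
    qhDist ({0}ᶜ : Set (EuclideanSpace ℝ (Fin n))) x y ≤
      Real.sqrt (InnerProductGeometry.angle x y ^ 2 + (Real.log ‖y‖ - Real.log ‖x‖) ^ 2) := by
  have hxn : 0 < ‖x‖ := norm_pos_iff.2 hx
  have hyn : 0 < ‖y‖ := norm_pos_iff.2 hy
  obtain ⟨w, hw, huw, hv⟩ := exists_frame n hn (‖x‖⁻¹ • x) (‖y‖⁻¹ • y)
    (by rw [norm_smul, norm_inv, norm_norm, inv_mul_cancel₀ hxn.ne'])
    (by rw [norm_smul, norm_inv, norm_norm, inv_mul_cancel₀ hyn.ne'])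
  have hu : ‖‖x‖⁻¹ • x‖ = 1 := by rw [norm_smul, norm_inv, norm_norm, inv_mul_cancel₀ hxn.ne']
  rw [InnerProductGeometry.angle_smul_left_of_pos _ _ (inv_pos.2 hxn),
    InnerProductGeometry.angle_smul_right_of_pos _ _ (inv_pos.2 hyn)] at hv
  have hxu : ‖x‖ • (‖x‖⁻¹ • x) = x := by rw [smul_smul, mul_inv_cancel₀ hxn.ne', one_smul]
  have hyv : ‖y‖ • (‖y‖⁻¹ • y) = y := by rw [smul_smul, mul_inv_cancel₀ hyn.ne', one_smul]
  set θ := InnerProductGeometry.angle x y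
  rw [hv] at hyv
  clear hv
  set u := ‖x‖⁻¹ • x
  set L := Real.log ‖y‖ - Real.log ‖x‖ with hL
  let ρ : ℝ → ℝ := fun t => Real.exp (Real.log ‖x‖ + t * L)
  let γ : ℝ → EuclideanSpace ℝ (Fin n) := fun t =>
    (ρ t * Real.cos (t * θ)) • u + (ρ t * Real.sin (t * θ)) • w
  have hρ : ∀ t, 0 < ρ t := fun t => Real.exp_pos _
  have hγn : ∀ t, ‖γ t‖ = ρ t := by
    intro t
    simp only [γ]
    rw [norm_comb n u w hu hw huw]
    rw [show (ρ t * Real.cos (t * θ)) ^ 2 + (ρ t * Real.sin (t * θ)) ^ 2 =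
      ρ t ^ 2 * (Real.sin (t * θ) ^ 2 + Real.cos (t * θ) ^ 2) by ring, Real.sin_sq_add_cos_sq,
      mul_one, Real.sqrt_sq (hρ t).le]
  have hγd : ∀ t, HasDerivAt γ
      ((ρ t * (L * Real.cos (t * θ) - θ * Real.sin (t * θ))) • u +
       (ρ t * (L * Real.sin (t * θ) + θ * Real.cos (t * θ))) • w) t := by
    intro t
    have hρd : HasDerivAt ρ (ρ t * L) t := by
      have := (((hasDerivAt_id t).mul_const L).const_add (Real.log ‖x‖)).exp
      simpa [ρ] using this
    have hlin : HasDerivAt (fun t : ℝ => t * θ) θ t := by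
      simpa using (hasDerivAt_id t).mul_const θ
    have h1 := ((hρd.mul hlin.cos).smul_const u).add ((hρd.mul hlin.sin).smul_const w)
    refine h1.congr_deriv ?_
    congr 2 <;> ring
  have hγdn : ∀ t, ‖deriv γ t‖ = ρ t * Real.sqrt (θ ^ 2 + L ^ 2) := by
    intro t
    rw [(hγd t).deriv, norm_comb n u w hu hw huw]
    rw [show (ρ t * (L * Real.cos (t * θ) - θ * Real.sin (t * θ))) ^ 2 +
      (ρ t * (L * Real.sin (t * θ) + θ * Real.cos (t * θ))) ^ 2 =
      ρ t ^ 2 * ((θ ^ 2 + L ^ 2) * (Real.sin (t * θ) ^ 2 + Real.cos (t * θ) ^ 2)) by ring,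
      Real.sin_sq_add_cos_sq, mul_one, Real.sqrt_mul (by positivity), Real.sqrt_sq (hρ t).le]
  have hsm : ContDiff ℝ 1 γ := by
    simp only [γ, ρ]
    fun_prop
  have hγ0 : γ 0 = x := by
    simp only [γ, ρ]
    simp only [zero_mul, add_zero, Real.cos_zero, Real.sin_zero, mul_one, mul_zero, zero_smul]
    rw [Real.exp_log hxn]; exact hxu
  have hγ1 : γ 1 = y := by
    simp only [γ, ρ]
    rw [one_mul, one_mul, hL, add_sub_cancel, Real.exp_log hyn, mul_smul, mul_smul, ← smul_add]
    exact hyv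
  have hmem : ∀ t ∈ Set.Icc (0:ℝ) 1, γ t ∈ ({0}ᶜ : Set (EuclideanSpace ℝ (Fin n))) := by
    intro t _ h0
    have h0 : γ t = 0 := h0
    have := hγn t
    rw [h0, norm_zero] at this
    exact (hρ t).ne this
  have hlen : qhLength ({0}ᶜ : Set (EuclideanSpace ℝ (Fin n))) γ = Real.sqrt (θ ^ 2 + L ^ 2) := by
    unfold qhLength
    have : ∀ t, ‖deriv γ t‖ / bdist ({0}ᶜ : Set (EuclideanSpace ℝ (Fin n))) (γ t) =
        Real.sqrt (θ ^ 2 + L ^ 2) := by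
      intro t
      rw [bdist_punctured n hn, hγn, hγdn, mul_div_cancel_left₀ _ (hρ t).ne']
    simp [this]
  rw [← hlen]
  unfold qhDist
  refine ciInf_le (f := fun γ : {γ : ℝ → EuclideanSpace ℝ (Fin n) // γ 0 = x ∧ γ 1 = y ∧
      (∀ t ∈ Set.Icc (0:ℝ) 1, γ t ∈ ({0}ᶜ : Set (EuclideanSpace ℝ (Fin n)))) ∧
      ContDiffOn ℝ 1 γ (Set.Icc 0 1)} => qhLength ({0}ᶜ : Set (EuclideanSpace ℝ (Fin n))) γ.1)
    ⟨0, ?_⟩ ⟨γ, hγ0, hγ1, hmem, hsm.contDiffOn⟩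
  rintro _ ⟨g, rfl⟩
  exact intervalIntegral.integral_nonneg zero_le_one
    (fun t _ => div_nonneg (norm_nonneg _) Metric.infDist_nonneg)

theorem stmt_6 (n : ℕ) (hn : 2 ≤ n) (α : ℝ) (hα : α ∈ Set.Ioc 0 Real.pi)
    (x y : EuclideanSpace ℝ (Fin n)) (hx : x ≠ 0) (hy : y ≠ 0)
    (hang : EuclideanGeometry.angle x 0 y ≤ α) :
    qhDist ({0}ᶜ : Set (EuclideanSpace ℝ (Fin n))) x y ≤
      (α / Real.log (1 + 2 * Real.sin (α / 2))) *
        jDist ({0}ᶜ : Set (EuclideanSpace ℝ (Fin n))) x y ∧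
    (α / Real.log (1 + 2 * Real.sin (α / 2))) *
        jDist ({0}ᶜ : Set (EuclideanSpace ℝ (Fin n))) x y ≤
      (1 + α) * jDist ({0}ᶜ : Set (EuclideanSpace ℝ (Fin n))) x y := by
  have hxn : 0 < ‖x‖ := norm_pos_iff.2 hx
  have hyn : 0 < ‖y‖ := norm_pos_iff.2 hy
  obtain ⟨hα0, hαπ⟩ := hα
  have hang' : InnerProductGeometry.angle x y ≤ α := by
    simpa [EuclideanGeometry.angle] using hang
  have hj : jDist ({0}ᶜ : Set (EuclideanSpace ℝ (Fin n))) x y =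
      Real.log (1 + dist x y / min ‖x‖ ‖y‖) := by
    unfold jDist
    rw [bdist_punctured n hn, bdist_punctured n hn]
  have hmin : 0 < min ‖x‖ ‖y‖ := lt_min hxn hyn
  have hj0 : 0 ≤ jDist ({0}ᶜ : Set (EuclideanSpace ℝ (Fin n))) x y := by
    rw [hj]
    apply Real.log_nonneg
    have : 0 ≤ dist x y / min ‖x‖ ‖y‖ := by positivity
    linarith
  refine ⟨?_, mul_le_mul_of_nonneg_right (second_ineq α hα0 hαπ) hj0⟩
  refine (qhDist_le_s6 n hn x y hx hy).trans ?_
  rw [hj]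
  have hd : dist x y ^ 2 = ‖x‖ ^ 2 + ‖y‖ ^ 2 -
      2 * (‖x‖ * ‖y‖ * Real.cos (InnerProductGeometry.angle x y)) := by
    rw [dist_eq_norm, norm_sub_sq_real, ← InnerProductGeometry.cos_angle_mul_norm_mul_norm]
    ring
  have hθ := InnerProductGeometry.angle_nonneg x y
  rcases le_total ‖x‖ ‖y‖ with h | h
  · rw [min_eq_left h]
    exact main_real α _ _ _ _ hα0 hαπ hθ hang' hxn h dist_nonneg hd
  · rw [min_eq_right h]
    have e : (Real.log ‖y‖ - Real.log ‖x‖) ^ 2 = (Real.log ‖x‖ - Real.log ‖y‖) ^ 2 := by ring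
    rw [e]
    exact main_real α _ _ _ _ hα0 hαπ hθ hang' hyn h dist_nonneg (by rw [hd]; ring)
end

section
/- Let G ⊊ ℝⁿ be a domain (nonempty open connected proper subset) with finite diameter, and set r = sqrt(n/(2n+2))·diam(G). Then for all distinct x, y ∈ G, writing t = |x−y|/r, one has k_G(x,y) ≥ 2·log(2/(2 − t)) ≥ t. Equivalently, the identity map from (G, k_G) to (G, |·|) has modulus of continuity ω(t) = 2r(1 − e^{−t/2}). -/
open Set Metric

lemma jung_finite {E ι : Type*} [NormedAddCommGroup E] [InnerProductSpace ℝ E] [Fintype ι]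
    [Nonempty ι] (p : ι → E) (D : ℝ) (n : ℕ) (hcard : Fintype.card ι ≤ n + 1)
    (hD : ∀ i j, ‖p i - p j‖ ≤ D) :
    ∃ c : E, ∀ k, ‖p k - c‖ ^ 2 ≤ (n : ℝ) / (2 * n + 2) * D ^ 2 := by
  classical
  let V : (ι → ℝ) → ℝ := fun w => ∑ i, w i * ‖p i‖ ^ 2 - ‖∑ i, w i • p i‖ ^ 2
  have hVc : Continuous V := by fun_prop
  have hne : (stdSimplex ℝ ι).Nonempty :=
    ⟨_, single_mem_stdSimplex ℝ (Classical.arbitrary ι)⟩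
  obtain ⟨w, hw, hmax⟩ := (isCompact_stdSimplex ℝ ι).exists_isMaxOn hne hVc.continuousOn
  set c := ∑ i, w i • p i with hc
  have key : ∀ k, ∀ s : ℝ, 0 < s → s ≤ 1 → (1 - s) * ‖p k - c‖ ^ 2 ≤ V w := by
    intro k s hs hs1
    have hmem : (1 - s) • w + s • (Pi.single k 1 : ι → ℝ) ∈ stdSimplex ℝ ι :=
      convex_stdSimplex ℝ ι hw (single_mem_stdSimplex ℝ k) (by linarith) hs.le (by ring)
    have h := hmax hmem
    simp only [Set.mem_ofPred_eq] at h
    have e1 : ∑ i, ((1 - s) • w + s • (Pi.single k 1 : ι → ℝ)) i * ‖p i‖ ^ 2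
        = (1 - s) * ∑ i, w i * ‖p i‖ ^ 2 + s * ‖p k‖ ^ 2 := by
      simp [add_mul, Finset.sum_add_distrib, Finset.mul_sum, mul_assoc, Pi.single_apply]
    have e2 : ∑ i, ((1 - s) • w + s • (Pi.single k 1 : ι → ℝ)) i • p i
        = (1 - s) • c + s • p k := by
      simp [add_smul, Finset.sum_add_distrib, Finset.smul_sum, mul_smul, Pi.single_apply, hc]
    have e3 : ‖(1 - s) • c + s • p k‖ ^ 2 = (1 - s) ^ 2 * ‖c‖ ^ 2
        + 2 * (s * (1 - s) * inner ℝ (p k) c) + s ^ 2 * ‖p k‖ ^ 2 := by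
      rw [norm_add_sq_real, norm_smul, norm_smul, inner_smul_left, inner_smul_right,
        real_inner_comm, mul_pow, mul_pow, Real.norm_eq_abs, Real.norm_eq_abs, sq_abs, sq_abs]
      simp
      ring
    have e4 : ‖p k - c‖ ^ 2 = ‖p k‖ ^ 2 - 2 * inner ℝ (p k) c + ‖c‖ ^ 2 := norm_sub_sq_real _ _
    simp only [V] at h ⊢
    rw [e1, e2, e3, ← hc] at h
    rw [← hc, e4]
    refine le_of_mul_le_mul_left ?_ hs
    nlinarith [h]
  have hV : V w ≤ (n : ℝ) / (2 * n + 2) * D ^ 2 := by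
    have hD0 : 0 ≤ D ^ 2 := sq_nonneg D
    have h1 : 2 * V w = ∑ i, ∑ j, w i * w j * ‖p i - p j‖ ^ 2 := by
      have : ∀ i j, w i * w j * ‖p i - p j‖ ^ 2 = w j * (w i * ‖p i‖ ^ 2)
          + w i * (w j * ‖p j‖ ^ 2) - 2 * inner ℝ (w i • p i) (w j • p j) := by
        intro i j
        rw [norm_sub_sq_real, inner_smul_left, inner_smul_right]
        simp
        ring
      simp_rw [this, Finset.sum_sub_distrib, Finset.sum_add_distrib, ← Finset.mul_sum,
        ← Finset.sum_mul, ← inner_sum]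
      rw [← Finset.mul_sum, ← sum_inner, hw.2, ← hc, real_inner_self_eq_norm_sq]
      simp only [V, ← hc]
      ring
    have h2 : ∑ i, ∑ j, w i * w j * ‖p i - p j‖ ^ 2 ≤ D ^ 2 * (1 - ∑ i, w i ^ 2) := by
      have : ∀ i j, w i * w j * ‖p i - p j‖ ^ 2 ≤
          D ^ 2 * (w i * w j - if i = j then w i * w j else 0) := by
        intro i j
        split_ifs with hij
        · subst hij; simp
        · have := pow_le_pow_left₀ (norm_nonneg _) (hD i j) 2
          nlinarith [mul_le_mul_of_nonneg_left this (mul_nonneg (hw.1 i) (hw.1 j))]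
      refine (Finset.sum_le_sum fun i _ => Finset.sum_le_sum fun j _ => this i j).trans ?_
      simp_rw [← Finset.mul_sum, Finset.sum_sub_distrib, ← Finset.mul_sum, hw.2]
      simp [hw.2, sq]
    have h3 := sq_sum_le_card_mul_sum_sq (s := (Finset.univ : Finset ι)) (f := w)
    rw [hw.2, Finset.card_univ] at h3
    have h4 : 1 ≤ ((n : ℝ) + 1) * ∑ i, w i ^ 2 := by
      refine (by simpa using h3 : (1 : ℝ) ≤ _).trans ?_
      gcongr
      exact_mod_cast hcard
    have h5 : 1 - ∑ i, w i ^ 2 ≤ n / (n + 1) := by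
      rw [le_div_iff₀ (by positivity)]
      linarith
    have h6 := mul_le_mul_of_nonneg_left h5 hD0
    have h7 : (n : ℝ) / (2 * n + 2) * D ^ 2 = D ^ 2 * (n / (n + 1)) / 2 := by
      field_simp
      try ring
    rw [h7]
    linarith
  refine ⟨c, fun k => le_trans ?_ hV⟩
  by_contra! hlt
  have hV0 : 0 ≤ V w := by simpa using key k 1 one_pos le_rfl
  have hq : 0 < ‖p k - c‖ ^ 2 := lt_of_le_of_lt hV0 hlt
  have := key k ((‖p k - c‖ ^ 2 - V w) / (2 * ‖p k - c‖ ^ 2))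
    (div_pos (by linarith) (by linarith)) (by rw [div_le_one (by linarith)]; linarith)
  have e : (1 - (‖p k - c‖ ^ 2 - V w) / (2 * ‖p k - c‖ ^ 2)) * ‖p k - c‖ ^ 2
      = (‖p k - c‖ ^ 2 + V w) / 2 := by
    generalize ‖p k - c‖ ^ 2 = q at *
    field_simp
    ring
  linarith

lemma jung (n : ℕ) (G : Set (EuclideanSpace ℝ (Fin n))) (hb : Bornology.IsBounded G) :
    ∃ c, G ⊆ closedBall c (Real.sqrt ((n : ℝ) / (2 * n + 2)) * Metric.diam G) := by
  set r := Real.sqrt ((n : ℝ) / (2 * n + 2)) * Metric.diam G with hr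
  have h := Convex.helly_theorem_compact' (𝕜 := ℝ) (F := fun p : G => closedBall (p : EuclideanSpace ℝ (Fin n)) r)
    (fun p => convex_closedBall _ _) (fun p => isCompact_closedBall _ _) (by
      intro I hI
      rw [finrank_euclideanSpace_fin] at hI
      rcases I.eq_empty_or_nonempty with rfl | hne
      · simp
      haveI : Nonempty I := hne.to_subtype
      obtain ⟨c, hc⟩ := jung_finite (fun i : I => ((i : G) : EuclideanSpace ℝ (Fin n)))
        (Metric.diam G) n (by simpa using hI) (fun i j => by
          rw [← dist_eq_norm]; exact dist_le_diam_of_mem hb i.1.2 j.1.2)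
      refine ⟨c, ?_⟩
      simp only [Set.mem_iInter]
      intro i hi
      rw [mem_closedBall', dist_eq_norm]
      have := hc ⟨i, hi⟩
      refine le_of_sq_le_sq ?_ (by positivity)
      rw [hr, mul_pow, Real.sq_sqrt (by positivity)]
      exact this)
  obtain ⟨c, hc⟩ := h
  refine ⟨c, fun p hp => ?_⟩
  rw [mem_closedBall']
  exact (Set.mem_iInter.1 hc ⟨p, hp⟩)

lemma exists_smooth_path {n : ℕ} {G : Set (EuclideanSpace ℝ (Fin n))} (hGo : IsOpen G)
    (hGc : IsPreconnected G) {x y : EuclideanSpace ℝ (Fin n)} (hx : x ∈ G) (hy : y ∈ G) :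
    ∃ γ : ℝ → EuclideanSpace ℝ (Fin n), ContDiff ℝ 1 γ ∧ (∀ t, γ t ∈ G) ∧
      (∀ t ≤ 0, γ t = x) ∧ ∀ t, 1 ≤ t → γ t = y := by
  let P : EuclideanSpace ℝ (Fin n) → EuclideanSpace ℝ (Fin n) → Prop := fun x y =>
    ∃ γ : ℝ → EuclideanSpace ℝ (Fin n), ContDiff ℝ 1 γ ∧ (∀ t, γ t ∈ G) ∧
      (∀ t ≤ 0, γ t = x) ∧ ∀ t, 1 ≤ t → γ t = y
  have seg : ∀ a b, (∀ s ∈ Icc (0:ℝ) 1, a + s • (b - a) ∈ G) → P a b := by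
    intro a b h
    refine ⟨fun t => a + Real.smoothTransition t • (b - a), ?_, ?_, ?_, ?_⟩
    · exact contDiff_const.add ((Real.smoothTransition.contDiff (n := 1)).smul contDiff_const)
    · exact fun t => h _ ⟨Real.smoothTransition.nonneg t, Real.smoothTransition.le_one t⟩
    · intro t ht
      simp [Real.smoothTransition.zero_of_nonpos ht]
    · intro t ht
      simp [Real.smoothTransition.one_of_one_le ht]
  refine IsPreconnected.induction₂' hGc P ?_ ?_ hx hy
  · intro a ha
    obtain ⟨ε, hε, hball⟩ := Metric.isOpen_iff.1 hGo a ha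
    filter_upwards [mem_nhdsWithin_of_mem_nhds (Metric.ball_mem_nhds a hε)] with b hb
    have hcv := convex_ball a ε
    refine ⟨seg a b fun s hs => hball ?_, seg b a fun s hs => hball ?_⟩
    · exact hcv.add_smul_sub_mem (mem_ball_self hε) hb hs
    · exact hcv.add_smul_sub_mem hb (mem_ball_self hε) hs
  · rintro a b c - - - ⟨γ, h1, h2, h3, h4⟩ ⟨η, g1, g2, g3, g4⟩
    refine ⟨fun t => γ (2 * t) + (η (2 * t - 1) - b), ?_, ?_, ?_, ?_⟩
    · exact (h1.comp (contDiff_const.mul contDiff_id)).add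
        ((g1.comp ((contDiff_const.mul contDiff_id).sub contDiff_const)).sub contDiff_const)
    · intro t
      rcases le_total (2 * t) 1 with h | h
      · simpa [g3 (2 * t - 1) (by linarith)] using h2 (2 * t)
      · simpa [h4 _ h] using g2 (2 * t - 1)
    · intro t ht
      simp [h3 (2 * t) (by linarith), g3 (2 * t - 1) (by linarith)]
    · intro t ht
      simp [h4 (2 * t) (by linarith), g4 (2 * t - 1) (by linarith)]

lemma exists_frontier_le {E : Type*} [NormedAddCommGroup E] [NormedSpace ℝ E] {G : Set E}
    {z w : E} (hz : z ∈ G) (hw : w ∉ G) : infDist z (frontier G) ≤ dist z w := by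
  have hs : IsPreconnected (segment ℝ z w) := (convex_segment z w).isPreconnected
  have : (segment ℝ z w ∩ frontier G).Nonempty := by
    by_contra hne
    rw [Set.not_nonempty_iff_eq_empty] at hne
    have h := isPreconnected_iff_subset_of_disjoint.1 hs (interior G) (closure G)ᶜ
      isOpen_interior isClosed_closure.isOpen_compl (by
        intro q hq
        by_cases hqi : q ∈ interior G
        · exact Or.inl hqi
        · refine Or.inr fun hqc => ?_
          have : q ∈ segment ℝ z w ∩ frontier G := ⟨hq, hqc, hqi⟩
          rw [hne] at this
          exact this) (by
        rw [Set.eq_empty_iff_forall_notMem]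
        rintro q ⟨-, h1, h2⟩
        exact h2 (subset_closure (interior_subset h1)))
    rcases h with h | h
    · exact hw (interior_subset (h (right_mem_segment ℝ z w)))
    · exact h (left_mem_segment ℝ z w) (subset_closure hz)
  obtain ⟨q, hq, hqf⟩ := this
  refine (infDist_le_dist_of_mem hqf).trans ?_
  have := dist_add_dist_of_mem_segment hq
  linarith [dist_nonneg (x := q) (y := w)]

lemma bdist_le_of_subset_ball {n : ℕ} (hn : 0 < n) {G : Set (EuclideanSpace ℝ (Fin n))}
    {c : EuclideanSpace ℝ (Fin n)} {r : ℝ} (hG : G ⊆ ball c r)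
    {z : EuclideanSpace ℝ (Fin n)} (hz : z ∈ G) : bdist G z ≤ r - ‖z - c‖ := by
  have hzr : ‖z - c‖ < r := by simpa [dist_eq_norm] using hG hz
  haveI : Nonempty (Fin n) := ⟨⟨0, hn⟩⟩
  obtain ⟨u, hu, hzu⟩ : ∃ u : EuclideanSpace ℝ (Fin n), ‖u‖ = 1 ∧ z - c = ‖z - c‖ • u := by
    by_cases h : z - c = 0
    · obtain ⟨u, hu⟩ := exists_norm_eq (EuclideanSpace ℝ (Fin n)) zero_le_one
      exact ⟨u, hu, by simp [h]⟩
    · exact ⟨‖z - c‖⁻¹ • (z - c), norm_smul_inv_norm h, by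
        rw [smul_inv_smul₀ (norm_ne_zero_iff.2 h)]⟩
  have hw : c + r • u ∉ G := fun h => by
    have := hG h
    have hr : 0 < r := (norm_nonneg _).trans_lt hzr
    simp [dist_eq_norm, norm_smul, hu, abs_of_pos hr] at this
  refine (exists_frontier_le hz hw).trans ?_
  have : z - (c + r • u) = (‖z - c‖ - r) • u := by
    rw [sub_smul, ← hzu]; abel
  rw [dist_eq_norm, this, norm_smul, hu, Real.norm_eq_abs, abs_of_neg (by linarith)]
  linarith

noncomputable def logF (r u : ℝ) : ℝ :=
  if 0 ≤ u then Real.log r - Real.log (r - u) else Real.log (r + u) - Real.log r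

lemma logF_hasDerivAt {r u : ℝ} (hu : |u| < r) : HasDerivAt (logF r) (1 / (r - |u|)) u := by
  obtain ⟨h1, h2⟩ := abs_lt.1 hu
  have hp : ∀ v, v < r → HasDerivAt (fun v => Real.log r - Real.log (r - v)) (1 / (r - v)) v := by
    intro v hv
    have := (((hasDerivAt_id v).const_sub r).log (by simp; linarith)).const_sub (Real.log r)
    simpa [neg_div] using this
  have hm : ∀ v, -r < v → HasDerivAt (fun v => Real.log (r + v) - Real.log r) (1 / (r + v)) v := by
    intro v hv
    have := (((hasDerivAt_id v).const_add r).log (by simp; linarith)).sub_const (Real.log r)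
    simpa using this
  rcases lt_trichotomy u 0 with h | h | h
  · rw [abs_of_neg h, sub_neg_eq_add]
    refine (hm u h1).congr_of_eventuallyEq ?_
    filter_upwards [gt_mem_nhds h] with v hv
    simp [logF, not_le.2 hv]
  · subst h
    have ha := (hp 0 h2).hasDerivWithinAt (s := Ici 0)
    have hb := (hm 0 h1).hasDerivWithinAt (s := Iic 0)
    have ha' : HasDerivWithinAt (logF r) (1 / (r - |0|)) (Ici 0) 0 := by
      simp only [abs_zero]
      refine ha.congr (fun v hv => ?_) ?_
      · simp only [mem_Ici] at hv; simp [logF, hv]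
      · simp [logF]
    have hb' : HasDerivWithinAt (logF r) (1 / (r - |0|)) (Iic 0) 0 := by
      simp only [abs_zero, sub_zero]
      simp only [add_zero] at hb
      refine hb.congr (fun v hv => ?_) ?_
      · rcases eq_or_lt_of_le (mem_Iic.1 hv) with h | h
        · subst h; simp [logF]
        · simp [logF, not_le.2 h]
      · simp [logF]
    have := hb'.union ha'
    rwa [Iic_union_Ici, hasDerivWithinAt_univ] at this
  · rw [abs_of_pos h]
    refine (hp u h2).congr_of_eventuallyEq ?_
    filter_upwards [lt_mem_nhds h] with v hv
    simp [logF, hv.le]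

lemma logF_sub {r u v : ℝ} (hu : |u| < r) (hv : |v| < r) (huv : u ≤ v) :
    2 * Real.log (2 / (2 - (v - u) / r)) ≤ logF r v - logF r u := by
  obtain ⟨h1, h2⟩ := abs_lt.1 hu
  obtain ⟨h3, h4⟩ := abs_lt.1 hv
  have hr : 0 < r := by linarith
  have e : 2 / (2 - (v - u) / r) = r / (r - (v - u) / 2) := by
    have : r - (v - u) / 2 ≠ 0 := by linarith
    have : 2 * r - (v - u) ≠ 0 := by linarith
    field_simp
  have hm : 0 < r - (v - u) / 2 := by linarith
  rw [e, Real.log_div hr.ne' hm.ne']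
  unfold logF
  have key : ∀ a b c d : ℝ, 0 < a → 0 < b → a * b ≤ c → 0 < c → c = d ^ 2 → 0 < d →
      Real.log a + Real.log b ≤ 2 * Real.log d := by
    intro a b c d ha hb h hc hcd hd
    rw [← Real.log_mul ha.ne' hb.ne']
    refine (Real.log_le_log (mul_pos ha hb) h).trans ?_
    rw [hcd, Real.log_pow]; simp
  have key3 : ∀ A : ℝ, 0 < A → A ≤ r → 0 < A - (v - u) →
      2 * Real.log r + Real.log (A - (v - u)) ≤ Real.log A + 2 * Real.log (r - (v - u) / 2) := by
    intro A hA hAr hAs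
    have ea : 2 * Real.log r + Real.log (A - (v - u)) = Real.log (r ^ 2 * (A - (v - u))) := by
      rw [Real.log_mul (by positivity) hAs.ne', Real.log_pow]; simp
    have eb : Real.log A + 2 * Real.log (r - (v - u) / 2)
        = Real.log (A * (r - (v - u) / 2) ^ 2) := by
      rw [Real.log_mul hA.ne' (by positivity), Real.log_pow]; simp
    rw [ea, eb]
    refine Real.log_le_log (by positivity) ?_
    have p1 := mul_nonneg (mul_nonneg hr.le (sub_nonneg.2 huv)) (sub_nonneg.2 hAr)
    have p2 := mul_nonneg hA.le (sq_nonneg (v - u))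
    nlinarith
  split_ifs with hv0 hu0 hu0
  · have := key3 (r - u) (by linarith) (by linarith) (by linarith)
    rw [show r - u - (v - u) = r - v by ring] at this
    linarith
  · have := key (r - v) (r + u) _ (r - (v - u) / 2) (by linarith) (by linarith)
      (by nlinarith [sq_nonneg (v + u)]) (by positivity) rfl hm
    linarith
  · linarith
  · have := key3 (r + v) (by linarith) (by linarith) (by linarith)
    rw [show r + v - (v - u) = r + u by ring] at this
    linarith

lemma qhLength_ge {n : ℕ} (hn : 0 < n) {G : Set (EuclideanSpace ℝ (Fin n))} (hGo : IsOpen G)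
    (hGp : G ≠ Set.univ) {c x y : EuclideanSpace ℝ (Fin n)} {r : ℝ} (hG : G ⊆ ball c r)
    (hxy : x ≠ y) (γ : ℝ → EuclideanSpace ℝ (Fin n)) (h0 : γ 0 = x) (h1 : γ 1 = y)
    (hγ : ∀ t ∈ Set.Icc (0:ℝ) 1, γ t ∈ G) (hd : ContDiffOn ℝ 1 γ (Set.Icc 0 1)) :
    2 * Real.log (2 / (2 - dist x y / r)) ≤ qhLength G γ := by
  have hfr : (frontier G).Nonempty := nonempty_frontier_iff.2 ⟨⟨γ 0, hγ 0 (by simp)⟩, hGp⟩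
  have hpos : ∀ z ∈ G, 0 < bdist G z := by
    intro z hz
    refine (isClosed_frontier.notMem_iff_infDist_pos hfr).1 fun h => ?_
    have : z ∈ G ∩ frontier G := ⟨hz, h⟩
    rw [hGo.inter_frontier_eq] at this
    exact this
  have hne : ‖y - x‖ ≠ 0 := norm_ne_zero_iff.2 (sub_ne_zero.2 hxy.symm)
  set e : EuclideanSpace ℝ (Fin n) := ‖y - x‖⁻¹ • (y - x) with he
  have hen : ‖e‖ = 1 := norm_smul_inv_norm (sub_ne_zero.2 hxy.symm)
  let u : ℝ → ℝ := fun t => inner ℝ e (γ t - c)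
  have hule : ∀ t, |u t| ≤ ‖γ t - c‖ := fun t => by
    simpa [hen] using abs_real_inner_le_norm e (γ t - c)
  have hult : ∀ t ∈ Icc (0:ℝ) 1, |u t| < r := fun t ht =>
    (hule t).trans_lt (by simpa [dist_eq_norm] using hG (hγ t ht))
  have hsub : u 1 - u 0 = dist x y := by
    simp only [u, h0, h1]
    rw [← inner_sub_right, sub_sub_sub_cancel_right, he, inner_smul_left,
      real_inner_self_eq_norm_sq, dist_comm, dist_eq_norm]
    simp
    field_simp
  have hγc : ContinuousOn γ (Icc 0 1) := hd.continuousOn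
  have hder : ∀ t ∈ Ioo (0:ℝ) 1, HasDerivAt γ (deriv γ t) t := fun t ht =>
    ((hd.differentiableOn one_ne_zero).differentiableAt (Icc_mem_nhds ht.1 ht.2)).hasDerivAt
  have huder : ∀ t ∈ Ioo (0:ℝ) 1, HasDerivAt u (inner ℝ e (deriv γ t)) t := by
    intro t ht
    have := (hasDerivAt_const t e).inner ℝ ((hder t ht).sub_const c)
    simpa using this
  have huc : ContinuousOn u (Icc 0 1) :=
    continuousOn_const.inner (hγc.sub continuousOn_const)
  have := intervalIntegral.sub_le_integral_of_hasDeriv_right_of_le (a := 0) (b := 1)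
    (g := fun t => logF r (u t)) (g' := fun t => 1 / (r - |u t|) * inner ℝ e (deriv γ t))
    (φ := fun t => ‖deriv γ t‖ / bdist G (γ t)) zero_le_one
    (fun t ht => (logF_hasDerivAt (hult t ht)).continuousAt.comp_continuousWithinAt (huc t ht))
    (fun t ht => ((logF_hasDerivAt (hult t (Ioo_subset_Icc_self ht))).comp t
      (huder t ht)).hasDerivWithinAt)
    (by
      have hcont : ContinuousOn (fun t => ‖derivWithin γ (Icc 0 1) t‖ / bdist G (γ t))
          (Icc 0 1) := by
        refine ContinuousOn.div ?_ ?_ fun t ht => (hpos _ (hγ t ht)).ne'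
        · exact (hd.continuousOn_derivWithin (uniqueDiffOn_Icc zero_lt_one) le_rfl).norm
        · exact (continuous_infDist_pt _).comp_continuousOn hγc
      have hi := (hcont.integrableOn_Icc (μ := MeasureTheory.volume))
      rw [integrableOn_Icc_iff_integrableOn_Ioo] at hi ⊢
      refine hi.congr_fun (fun t ht => ?_) measurableSet_Ioo
      simp only
      rw [derivWithin_of_mem_nhds (Icc_mem_nhds ht.1 ht.2)])
    (fun t ht => by
      have htI := Ioo_subset_Icc_self ht
      have hb := hpos _ (hγ t htI)
      have hb2 := bdist_le_of_subset_ball hn hG (hγ t htI)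
      have hb3 : bdist G (γ t) ≤ r - |u t| := by linarith [hule t]
      have hin : inner ℝ e (deriv γ t) ≤ ‖deriv γ t‖ := by
        simpa [hen] using real_inner_le_norm e (deriv γ t)
      calc 1 / (r - |u t|) * inner ℝ e (deriv γ t) ≤ 1 / (r - |u t|) * ‖deriv γ t‖ := by
            refine mul_le_mul_of_nonneg_left hin (one_div_nonneg.2 (by linarith))
        _ = ‖deriv γ t‖ / (r - |u t|) := by ring
        _ ≤ _ := div_le_div_of_nonneg_left (norm_nonneg _) hb hb3)
  have h2 := logF_sub (hult 0 (by simp)) (hult 1 (by simp))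
    (by linarith [dist_nonneg (x := x) (y := y)])
  rw [hsub] at h2
  exact h2.trans this

theorem stmt_9 (n : ℕ) (G : Set (EuclideanSpace ℝ (Fin n)))
    (hGo : IsOpen G) (hGc : IsConnected G) (hGp : G ≠ Set.univ)
    (hGb : Bornology.IsBounded G)
    (r : ℝ) (hr : r = Real.sqrt ((n : ℝ) / (2 * n + 2)) * Metric.diam G)
    (x y : EuclideanSpace ℝ (Fin n)) (hx : x ∈ G) (hy : y ∈ G) (hxy : x ≠ y)
    (t : ℝ) (ht : t = dist x y / r) :
    2 * Real.log (2 / (2 - t)) ≤ qhDist G x y ∧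
    t ≤ 2 * Real.log (2 / (2 - t)) ∧
    dist x y ≤ 2 * r * (1 - Real.exp (-(qhDist G x y) / 2)) := by
  have hn : 0 < n := by
    rcases Nat.eq_zero_or_pos n with rfl | h
    · exact absurd (Subsingleton.elim x y) hxy
    · exact h
  have hdist : 0 < dist x y := dist_pos.2 hxy
  have hdiam : 0 < Metric.diam G := hdist.trans_le (dist_le_diam_of_mem hGb hx hy)
  have hn' : (0:ℝ) < n := by exact_mod_cast hn
  have hr0 : 0 < r := by rw [hr]; positivity
  obtain ⟨c, hc⟩ := jung n G hGb
  rw [← hr] at hc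
  have hG : G ⊆ ball c r := by
    rw [← interior_closedBall c hr0.ne']
    exact interior_maximal hc hGo
  have ht2 : t < 2 := by
    rw [ht, div_lt_iff₀ hr0]
    have h1 := hG hx
    have h2 := hG hy
    rw [mem_ball] at h1 h2
    linarith [dist_triangle_right x y c]
  have ht0 : 0 < t := by rw [ht]; positivity
  have main : 2 * Real.log (2 / (2 - t)) ≤ qhDist G x y := by
    obtain ⟨γ, g1, g2, g3, g4⟩ := exists_smooth_path hGo hGc.isPreconnected hx hy
    haveI : Nonempty {γ : ℝ → EuclideanSpace ℝ (Fin n) // γ 0 = x ∧ γ 1 = y ∧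
      (∀ t ∈ Set.Icc (0:ℝ) 1, γ t ∈ G) ∧ ContDiffOn ℝ 1 γ (Set.Icc 0 1)} :=
      ⟨⟨γ, g3 0 le_rfl, g4 1 le_rfl, fun t _ => g2 t, g1.contDiffOn⟩⟩
    refine le_ciInf fun γ => ?_
    rw [ht]
    exact qhLength_ge hn hGo hGp hG hxy γ.1 γ.2.1 γ.2.2.1 γ.2.2.2.1 γ.2.2.2.2
  have hlog : Real.log (2 / (2 - t)) = - Real.log (1 - t / 2) := by
    rw [← Real.log_inv]
    congr 1
    have : 2 - t ≠ 0 := by linarith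
    have : 1 - t / 2 ≠ 0 := by linarith
    field_simp
  have hp : 0 < 1 - t / 2 := by linarith
  refine ⟨main, ?_, ?_⟩
  · rw [hlog]
    linarith [Real.log_le_sub_one_of_pos hp]
  · have h1 : -(qhDist G x y) / 2 ≤ Real.log (1 - t / 2) := by
      rw [hlog] at main
      linarith
    have h2 : Real.exp (-(qhDist G x y) / 2) ≤ 1 - t / 2 := by
      rw [← Real.exp_log hp]
      exact Real.exp_le_exp.2 h1
    have h3 : dist x y = t * r := by rw [ht]; field_simp
    rw [h3]
    nlinarith
end
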